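/- Let S be a quasi-hereditary algebra with a simple-preserving duality satisfying strong property A and with gfd(S) = n. Then the global dimension of S equals 2n. -/

import Mathlib

/-!
Common definitions for formalizing "On the global and ∇-filtration dimensions of
quasi-hereditary algebras" by Erdmann and Parker.

We work with a finite-dimensional algebra `S` over a field `k`; since `S` is
finite dimensional over `k`, the finite-dimensional `S`-modules are exactly the
finitely generated ones, so we express finite-dimensionality of a module `M` as
`Module.Finite S M`.
-/

open CategoryTheory

namespace QHPaper

variable (S : Type) [Ring S]

/-- The subquotient `B ⧸ A` associated to two submodules `A B` of `M`. -/
abbrev subquot {M : ModuleCat.{0} S} (A B : Submodule S ↥M) : Type :=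
  ↥B ⧸ (Submodule.comap B.subtype A)

/-- A filtration `⊥ = f 0 ≤ f 1 ≤ ⋯ ≤ f n = ⊤` of `M` whose `i`-th section
`f (i+1) / f i` is isomorphic to the prescribed module `D i`. -/
def HasFiltrationWithSections (M : ModuleCat.{0} S) (n : ℕ)
    (f : Fin (n + 1) → Submodule S ↥M) (D : Fin n → ModuleCat.{0} S) : Prop :=
  Monotone f ∧ f 0 = ⊥ ∧ f (Fin.last n) = ⊤ ∧
    ∀ i : Fin n, Nonempty ((subquot S (f i.castSucc) (f i.succ)) ≃ₗ[S] ↥(D i))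

/-- `L` occurs as a (simple) subquotient of `M`; for `L` simple this says that `L`
is a composition factor of `M`. -/
def IsCompFactor (L M : ModuleCat.{0} S) : Prop :=
  ∃ (A B : Submodule S ↥M), A ≤ B ∧ Nonempty ((subquot S A B) ≃ₗ[S] ↥L)

/-- `L` occurs with multiplicity `m` among the sections of a composition series of `M`. -/
def CompFactorMult (L M : ModuleCat.{0} S) (m : ℕ) : Prop :=
  ∃ (n : ℕ) (f : Fin (n + 1) → Submodule S ↥M),
    Monotone f ∧ f 0 = ⊥ ∧ f (Fin.last n) = ⊤ ∧
    (∀ i : Fin n, IsSimpleModule S (subquot S (f i.castSucc) (f i.succ))) ∧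
    Nat.card {i : Fin n // Nonempty ((subquot S (f i.castSucc) (f i.succ)) ≃ₗ[S] ↥L)} = m

/-- `P` is a projective cover of `M`: `P` is projective and there is a surjection
`P → M` whose kernel is superfluous in `P`. -/
def IsProjCover (P M : ModuleCat.{0} S) : Prop :=
  Module.Projective S ↥P ∧ ∃ π : ↥P →ₗ[S] ↥M, Function.Surjective π ∧
    ∀ N : Submodule S ↥P, N ⊔ LinearMap.ker π = ⊤ → N = ⊤

/-- `I` is an injective hull of `M`: `I` is injective and there is an injection
`M → I` with essential image. -/
def IsInjHull (I M : ModuleCat.{0} S) : Prop :=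
  Module.Injective S ↥I ∧ ∃ ι : ↥M →ₗ[S] ↥I, Function.Injective ι ∧
    ∀ N : Submodule S ↥I, N ⊓ LinearMap.range ι = ⊥ → N = ⊥

/-- The data of a quasi-hereditary algebra structure on `S` with weight poset `Λ`:
a full set `L` of pairwise non-isomorphic simple modules, their projective covers `P`
and injective hulls `I`, the standard modules `std` (largest quotient of `P lam` with
all composition factors `L mu`, `mu ≤ lam`), the costandard modules `costd`
(largest submodule of `I lam` with all composition factors `L mu`, `mu ≤ lam`),
such that `L lam` occurs exactly once in `std lam` and `P lam` is filtered by
standard modules `std mu` with `mu ≥ lam`, with `std lam` occurring exactly once. -/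
structure QHData (Λ : Type) [Fintype Λ] [PartialOrder Λ] where
  L : Λ → ModuleCat.{0} S
  P : Λ → ModuleCat.{0} S
  I : Λ → ModuleCat.{0} S
  std : Λ → ModuleCat.{0} S
  costd : Λ → ModuleCat.{0} S
  finiteL : ∀ lam, Module.Finite S ↥(L lam)
  simpleL : ∀ lam, IsSimpleModule S ↥(L lam)
  nonisoL : ∀ lam mu, lam ≠ mu → IsEmpty (↥(L lam) ≃ₗ[S] ↥(L mu))
  fullL : ∀ M : ModuleCat.{0} S, IsSimpleModule S ↥M → ∃ lam, Nonempty (↥M ≃ₗ[S] ↥(L lam))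
  projCover : ∀ lam, IsProjCover S (P lam) (L lam)
  injHull : ∀ lam, IsInjHull S (I lam) (L lam)
  stdSpec : ∀ lam, ∃ K : Submodule S ↥(P lam),
    Nonempty (↥(std lam) ≃ₗ[S] (↥(P lam) ⧸ K)) ∧
    (∀ mu, IsCompFactor S (L mu) (ModuleCat.of S (↥(P lam) ⧸ K)) → mu ≤ lam) ∧
    ∀ K' : Submodule S ↥(P lam),
      (∀ mu, IsCompFactor S (L mu) (ModuleCat.of S (↥(P lam) ⧸ K')) → mu ≤ lam) → K ≤ K'
  costdSpec : ∀ lam, ∃ V : Submodule S ↥(I lam),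
    Nonempty (↥(costd lam) ≃ₗ[S] ↥V) ∧
    (∀ mu, IsCompFactor S (L mu) (ModuleCat.of S ↥V) → mu ≤ lam) ∧
    ∀ V' : Submodule S ↥(I lam),
      (∀ mu, IsCompFactor S (L mu) (ModuleCat.of S ↥V') → mu ≤ lam) → V' ≤ V
  multOne : ∀ lam, CompFactorMult S (L lam) (std lam) 1
  projFilt : ∀ lam, ∃ (n : ℕ) (f : Fin (n + 1) → Submodule S ↥(P lam)) (g : Fin n → Λ),
    HasFiltrationWithSections S (P lam) n f (fun i => std (g i)) ∧
    (∀ i, lam ≤ g i) ∧ Nat.card {i : Fin n // g i = lam} = 1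

variable {Λ : Type} [Fintype Λ] [PartialOrder Λ]

/-- `M` has a filtration with costandard sections, i.e. `M ∈ F(∇)`. -/
def InCostdFilt (Q : QHData S Λ) (M : ModuleCat.{0} S) : Prop :=
  ∃ (n : ℕ) (f : Fin (n + 1) → Submodule S ↥M) (g : Fin n → Λ),
    HasFiltrationWithSections S M n f (fun i => Q.costd (g i))

/-- `M` has a filtration with standard sections, i.e. `M ∈ F(Δ)`. -/
def InStdFilt (Q : QHData S Λ) (M : ModuleCat.{0} S) : Prop :=
  ∃ (n : ℕ) (f : Fin (n + 1) → Submodule S ↥M) (g : Fin n → Λ),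
    HasFiltrationWithSections S M n f (fun i => Q.std (g i))

/-- `0 → N 0 → N 1 → ⋯ → N (n+1) → 0` is exact. -/
def IsExactSeq (n : ℕ) (N : Fin (n + 2) → ModuleCat.{0} S)
    (f : ∀ i : Fin (n + 1), ↥(N i.castSucc) →ₗ[S] ↥(N i.succ)) : Prop :=
  Function.Injective (f 0) ∧ Function.Surjective (f (Fin.last n)) ∧
    ∀ i : Fin n, LinearMap.range (f i.castSucc) = LinearMap.ker (f i.succ)

/-- `M` has a ∇-resolution (co-resolution by modules in `F(∇)`) of length `d`:
`0 → M → M₀ → ⋯ → M_d → 0` with each `Mᵢ ∈ F(∇)`. -/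
def GfdLE (Q : QHData S Λ) (M : ModuleCat.{0} S) (d : ℕ) : Prop :=
  ∃ (N : Fin (d + 2) → ModuleCat.{0} S)
    (f : ∀ i : Fin (d + 1), ↥(N i.castSucc) →ₗ[S] ↥(N i.succ)),
    IsExactSeq S d N f ∧ N 0 = M ∧ ∀ i : Fin (d + 1), InCostdFilt S Q (N i.succ)

/-- The ∇-filtration dimension (good filtration dimension) of a module. -/
noncomputable def gfd (Q : QHData S Λ) (M : ModuleCat.{0} S) : ℕ :=
  sInf {d | GfdLE S Q M d}

/-- `M` has a resolution `0 → M_d → ⋯ → M₀ → M → 0` with each `Mᵢ ∈ F(Δ)`. -/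
def WfdLE (Q : QHData S Λ) (M : ModuleCat.{0} S) (d : ℕ) : Prop :=
  ∃ (N : Fin (d + 2) → ModuleCat.{0} S)
    (f : ∀ i : Fin (d + 1), ↥(N i.castSucc) →ₗ[S] ↥(N i.succ)),
    IsExactSeq S d N f ∧ N (Fin.last (d + 1)) = M ∧
    ∀ i : Fin (d + 1), InStdFilt S Q (N i.castSucc)

/-- The Δ-filtration dimension of a module. -/
noncomputable def wfd (Q : QHData S Λ) (M : ModuleCat.{0} S) : ℕ :=
  sInf {d | WfdLE S Q M d}

/-- `M` has a projective resolution of length `d`. -/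
def ProjdimLE (M : ModuleCat.{0} S) (d : ℕ) : Prop :=
  ∃ (N : Fin (d + 2) → ModuleCat.{0} S)
    (f : ∀ i : Fin (d + 1), ↥(N i.castSucc) →ₗ[S] ↥(N i.succ)),
    IsExactSeq S d N f ∧ N (Fin.last (d + 1)) = M ∧
    ∀ i : Fin (d + 1), Module.Projective S ↥(N i.castSucc)

/-- The projective dimension of a module. -/
noncomputable def projdim (M : ModuleCat.{0} S) : ℕ :=
  sInf {d | ProjdimLE S M d}

/-- `M` has an injective resolution of length `d`. -/
def InjdimLE (M : ModuleCat.{0} S) (d : ℕ) : Prop :=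
  ∃ (N : Fin (d + 2) → ModuleCat.{0} S)
    (f : ∀ i : Fin (d + 1), ↥(N i.castSucc) →ₗ[S] ↥(N i.succ)),
    IsExactSeq S d N f ∧ N 0 = M ∧
    ∀ i : Fin (d + 1), Module.Injective S ↥(N i.succ)

/-- The injective dimension of a module. -/
noncomputable def injdim (M : ModuleCat.{0} S) : ℕ :=
  sInf {d | InjdimLE S M d}

/-- `gfd(S)`: the supremum of the ∇-filtration dimensions of all
finite-dimensional `S`-modules. -/
noncomputable def gfdAlg (Q : QHData S Λ) : ℕ :=
  sSup {d | ∃ M : ModuleCat.{0} S, Module.Finite S ↥M ∧ gfd S Q M = d}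

/-- `wfd(S)`: the supremum of the Δ-filtration dimensions of all
finite-dimensional `S`-modules. -/
noncomputable def wfdAlg (Q : QHData S Λ) : ℕ :=
  sSup {d | ∃ M : ModuleCat.{0} S, Module.Finite S ↥M ∧ wfd S Q M = d}

/-- The global dimension of `S`: the supremum of the projective dimensions of all
finite-dimensional `S`-modules. -/
noncomputable def globdim : ℕ :=
  sSup {d | ∃ M : ModuleCat.{0} S, Module.Finite S ↥M ∧ projdim S M = d}

/-- `Ext^n_S(A, B) ≠ 0`. -/
noncomputable def extNe (A B : ModuleCat.{0} S) (n : ℕ) : Prop :=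
  Nontrivial ↥(((Ext ℤ (ModuleCat.{0} S) n).obj (Opposite.op A)).obj B)

/-- A simple-preserving duality on `S`: a contravariant, exact, fully faithful,
additive self-functor `D` on the category of finite-dimensional `S`-modules with
`D (D M) ≅ M` and `D (L lam) ≅ L lam` for all `lam`. -/
structure Duality (Q : QHData S Λ) where
  D : ModuleCat.{0} S → ModuleCat.{0} S
  Dmap : ∀ {A B : ModuleCat.{0} S}, (↥A →ₗ[S] ↥B) → (↥(D B) →ₗ[S] ↥(D A))
  finD : ∀ M : ModuleCat.{0} S, Module.Finite S ↥M → Module.Finite S ↥(D M)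
  Did : ∀ A : ModuleCat.{0} S, Module.Finite S ↥A →
    Dmap (LinearMap.id : ↥A →ₗ[S] ↥A) = LinearMap.id
  Dcomp : ∀ {A B C : ModuleCat.{0} S}, Module.Finite S ↥A → Module.Finite S ↥B →
    Module.Finite S ↥C → ∀ (f : ↥A →ₗ[S] ↥B) (g : ↥B →ₗ[S] ↥C),
      Dmap (g ∘ₗ f) = Dmap f ∘ₗ Dmap g
  Dadd : ∀ {A B : ModuleCat.{0} S}, Module.Finite S ↥A → Module.Finite S ↥B →
    ∀ (f g : ↥A →ₗ[S] ↥B), Dmap (f + g) = Dmap f + Dmap g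
  Dfull : ∀ {A B : ModuleCat.{0} S}, Module.Finite S ↥A → Module.Finite S ↥B →
    Function.Bijective (fun f : ↥A →ₗ[S] ↥B => Dmap f)
  Dexact : ∀ {A B C : ModuleCat.{0} S}, Module.Finite S ↥A → Module.Finite S ↥B →
    Module.Finite S ↥C → ∀ (f : ↥A →ₗ[S] ↥B) (g : ↥B →ₗ[S] ↥C),
      Function.Injective f → Function.Surjective g →
      LinearMap.range f = LinearMap.ker g →
      Function.Injective (Dmap g) ∧ Function.Surjective (Dmap f) ∧
        LinearMap.range (Dmap g) = LinearMap.ker (Dmap f)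
  Dinvol : ∀ M : ModuleCat.{0} S, Module.Finite S ↥M → Nonempty (↥(D (D M)) ≃ₗ[S] ↥M)
  DL : ∀ lam, Nonempty (↥(D (Q.L lam)) ≃ₗ[S] ↥(Q.L lam))

/-- Strong property A: `mu < lam` implies `gfd (L mu) < gfd (L lam)`. -/
def StrongPropA (Q : QHData S Λ) : Prop :=
  ∀ mu lam : Λ, mu < lam → gfd S Q (Q.L mu) < gfd S Q (Q.L lam)

/-- Property A: `mu < lam` implies `gfd (L mu) ≤ gfd (L lam)`. -/
def PropA (Q : QHData S Λ) : Prop :=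
  ∀ mu lam : Λ, mu < lam → gfd S Q (Q.L mu) ≤ gfd S Q (Q.L lam)

/-- Property B: `mu < lam` implies `wfd (∇ mu) ≤ wfd (∇ lam)`. -/
def PropB (Q : QHData S Λ) : Prop :=
  ∀ mu lam : Λ, mu < lam → wfd S Q (Q.costd mu) ≤ wfd S Q (Q.costd lam)

/-- Property C: `wfd (∇ lam) = gfd S - inj (∇ lam)` for all `lam`. -/
def PropC (Q : QHData S Λ) : Prop :=
  ∀ lam : Λ, wfd S Q (Q.costd lam) = gfdAlg S Q - injdim S (Q.costd lam)

/-- Property D: `wfd (∇ lam) = wfd (L lam)` for all `lam`. -/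
def PropD (Q : QHData S Λ) : Prop :=
  ∀ lam : Λ, wfd S Q (Q.costd lam) = wfd S Q (Q.L lam)

/-- Property E: `mu < lam` implies `inj (∇ mu) ≥ inj (∇ lam)`. -/
def PropE (Q : QHData S Λ) : Prop :=
  ∀ mu lam : Λ, mu < lam → injdim S (Q.costd lam) ≤ injdim S (Q.costd mu)

/-- The partial order is minimal for the quasi-hereditary structure: whenever
`mu < lam` are adjacent, `L mu` is a composition factor of `Δ lam` or of `∇ lam`. -/
def MinimalOrder (Q : QHData S Λ) : Prop :=
  ∀ mu lam : Λ, mu < lam → (¬ ∃ nu, mu < nu ∧ nu < lam) →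
    IsCompFactor S (Q.L mu) (Q.std lam) ∨ IsCompFactor S (Q.L mu) (Q.costd lam)

/-- `S` is connected (indecomposable as an algebra, i.e. one block): the only
central idempotents are `0` and `1`. -/
def ConnectedRing : Prop :=
  ∀ c : S, c * c = c → (∀ s : S, c * s = s * c) → c = 0 ∨ c = 1

/-- A tilting module: a module in `F(Δ) ∩ F(∇)`. -/
def IsTilting (Q : QHData S Λ) (T : ModuleCat.{0} S) : Prop :=
  InStdFilt S Q T ∧ InCostdFilt S Q T

/-- The indecomposable tilting module `T(lam)`: an indecomposable tilting module in
which `L lam` occurs exactly once and all other composition factors `L mu` have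
`mu < lam`. -/
def IsIndecTilting (Q : QHData S Λ) (lam : Λ) (T : ModuleCat.{0} S) : Prop :=
  IsTilting S Q T ∧ Nontrivial ↥T ∧
    (∀ A B : Submodule S ↥T, IsCompl A B → A = ⊥ ∨ B = ⊥) ∧
    CompFactorMult S (Q.L lam) T 1 ∧
    ∀ mu, IsCompFactor S (Q.L mu) T → mu = lam ∨ mu < lam

/-- A full tilting module: a (finite-dimensional) tilting module having every
indecomposable tilting module as a direct summand. -/
def IsFullTilting (Q : QHData S Λ) (T : ModuleCat.{0} S) : Prop :=
  IsTilting S Q T ∧ Module.Finite S ↥T ∧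
    ∀ (lam : Λ) (Tl : ModuleCat.{0} S), IsIndecTilting S Q lam Tl →
      ∃ Cc : ModuleCat.{0} S, Nonempty (↥T ≃ₗ[S] (↥Tl × ↥Cc))

/-- The Ringel dual ring `S' = End_S(T)^op`. -/
abbrev RingelDualRing (T : ModuleCat.{0} S) : Type := (Module.End S ↥T)ᵐᵒᵖ

/-- `Hom_S(T, X)` is a module over `S' = End_S(T)^op` via `f • φ = φ ∘ f`. -/
instance homTModule (T X : ModuleCat.{0} S) :
    Module (RingelDualRing S T) (↥T →ₗ[S] ↥X) where
  smul a φ := φ ∘ₗ a.unop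
  one_smul φ := rfl
  mul_smul a b φ := rfl
  smul_zero a := rfl
  smul_add a φ ψ := rfl
  add_smul a b φ := by
    ext x
    show φ ((a.unop + b.unop) x) = φ (a.unop x) + φ (b.unop x)
    rw [LinearMap.add_apply, map_add]
  zero_smul φ := by
    ext x
    show φ ((0 : Module.End S ↥T) x) = 0
    rw [LinearMap.zero_apply, map_zero]

/-- The `S'`-module `Hom_S(T, X)`, i.e. the image of `X` under the functor
`F = Hom_S(T, -)`. -/
noncomputable def homTMod (T X : ModuleCat.{0} S) :
    ModuleCat.{0} (RingelDualRing S T) :=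
  ModuleCat.of (RingelDualRing S T) (↥T →ₗ[S] ↥X)

/-- `Q'` is a Ringel dual quasi-hereditary structure for `(Q, T)`:
`T` is a full tilting module, `Q'` is a quasi-hereditary structure on
`S' = End_S(T)^op` for the opposite poset, and its standard modules are
`Δ'(lam) = Hom_S(T, ∇(lam))`. -/
def IsRingelDualData (Q : QHData S Λ) (T : ModuleCat.{0} S)
    (Q' : QHData (RingelDualRing S T) Λᵒᵈ) : Prop :=
  IsFullTilting S Q T ∧
    ∀ lam : Λ, Nonempty
      (↥(Q'.std (OrderDual.toDual lam)) ≃ₗ[RingelDualRing S T]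
        (↥T →ₗ[S] ↥(Q.costd lam)))

/-- `0 → T_d → ⋯ → T_0 → M → 0` exact with all `T_i` tilting modules. -/
def TiltResLE (Q : QHData S Λ) (M : ModuleCat.{0} S) (d : ℕ) : Prop :=
  ∃ (N : Fin (d + 2) → ModuleCat.{0} S)
    (f : ∀ i : Fin (d + 1), ↥(N i.castSucc) →ₗ[S] ↥(N i.succ)),
    IsExactSeq S d N f ∧ N (Fin.last (d + 1)) = M ∧
    ∀ i : Fin (d + 1), IsTilting S Q (N i.castSucc)

/-- An idempotent `e` is primitive if it is nonzero and is not the sum of two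
nonzero orthogonal idempotents. -/
def IsPrimitiveIdempotent (e : S) : Prop :=
  e * e = e ∧ e ≠ 0 ∧ ∀ a b : S, a * a = a → b * b = b → a * b = 0 → b * a = 0 →
    e = a + b → a = 0 ∨ b = 0

/-- The additive subgroup `e•M = {m | e • m = m}` of `M` (for `e` idempotent). -/
def cornerSet (eG : S) (M : ModuleCat.{0} S) : AddSubgroup ↥M where
  carrier := {m | eG • m = m}
  add_mem' := by
    intro a b ha hb
    simp only [Set.mem_setOf_eq] at *
    rw [smul_add, ha, hb]
  zero_mem' := by
    simp only [Set.mem_setOf_eq]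
    rw [smul_zero]
  neg_mem' := by
    intro a ha
    simp only [Set.mem_setOf_eq] at *
    rw [smul_neg, ha]

/-- The `R`-module structure on `e•M`, where `ι : R → S` identifies `R` with the
corner ring `eSe` (as a non-unital ring, with `ι 1 = e`). -/
def cornerModuleStructure (R : Type) [Ring R] (ι : R →ₙ+* S) (eG : S)
    (hone : ι 1 = eG) (hrange : ∀ r : R, eG * ι r * eG = ι r)
    (M : ModuleCat.{0} S) : Module R ↥(cornerSet S eG M) where
  smul r m := ⟨ι r • (m : ↥M), by
    have hm : eG • (m : ↥M) = (m : ↥M) := m.2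
    show eG • (ι r • (m : ↥M)) = ι r • (m : ↥M)
    have h : eG • (ι r • (m : ↥M)) = (eG * ι r * eG) • (m : ↥M) := by
      rw [mul_assoc, mul_smul, mul_smul, hm]
    rw [h, hrange]⟩
  one_smul m := by
    apply Subtype.ext
    show ι 1 • (m : ↥M) = (m : ↥M)
    rw [hone]
    exact m.2
  mul_smul r s m := by
    apply Subtype.ext
    show ι (r * s) • (m : ↥M) = ι r • (ι s • (m : ↥M))
    rw [map_mul, mul_smul]
  smul_zero r := by
    apply Subtype.ext
    show ι r • (0 : ↥M) = 0
    rw [smul_zero]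
  smul_add r m n := by
    apply Subtype.ext
    show ι r • ((m : ↥M) + (n : ↥M)) = ι r • (m : ↥M) + ι r • (n : ↥M)
    rw [smul_add]
  add_smul r s m := by
    apply Subtype.ext
    show ι (r + s) • (m : ↥M) = ι r • (m : ↥M) + ι s • (m : ↥M)
    rw [map_add, add_smul]
  zero_smul m := by
    apply Subtype.ext
    show ι 0 • (m : ↥M) = 0
    rw [map_zero, zero_smul]

/-- The `R`-module `e•M`, where `R ≅ eSe` via `ι`. -/
noncomputable def cornerMod (R : Type) [Ring R] (ι : R →ₙ+* S) (eG : S)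
    (hone : ι 1 = eG) (hrange : ∀ r : R, eG * ι r * eG = ι r)
    (M : ModuleCat.{0} S) : ModuleCat.{0} R :=
  @ModuleCat.of R _ ↥(cornerSet S eG M) _
    (cornerModuleStructure S R ι eG hone hrange M)

end QHPaper

/-!
Writing `gfd X` for the good filtration dimension, `Ext^i(M, X) = 0` for `i > gfd S + gfd X`: when
`X` has a costandard filtration, the duality turns `Ext^i(M, ∇ ν)` into `Ext^i(Δ ν, M°)`, and
coresolving `X` gives the general case. Hence the global dimension is at most `2n`.

For the lower bound, strong property A and induction along `0 → L l → ∇ l → ∇ l / L l → 0` give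
`j + gfd (L ν) ≤ gfd (L l)` whenever `Ext^j(Δ ν, L l) ≠ 0`. So `Ext^n(Δ ν, L l)` can be nonzero only
for `ν` minimal, where `Δ ν = L ν = ∇ ν`, and it is nonzero for some `l` and some minimal `ν = μ`.
Let `V` be an `(n - 1)`-st cosyzygy of `L l`. If `Ext^{2n}(L l, L l) = Ext^{n + 1}(L l, V)`
vanished, then so would `Ext^1(L μ, V) = Ext^n(L μ, L l)`: divide `V` by its largest submodule
supported on minimal weights, so that `V` embeds into a module `J` on which `Ext^1(Δ ν, -)` vanishes
and which has no nonzero map from a minimal simple module, and let `G ⊆ J` be the preimage of the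
largest submodule `R` of `J / V` supported on minimal weights. Then `G` has a filtration by `∇ ν`
with `ν` not minimal, hence `Ext^n(L l, G) = 0` and `Ext^n(L l, R)` embeds into
`Ext^{n + 1}(L l, V) = 0`. As `R` is semisimple and `Ext^n(L l, L μ) ≠ 0`, there is no nonzero map
`L μ → R`, and so `Ext^1(L μ, V)` embeds into `Ext^1(L μ, G) = 0`.
-/

namespace QHPaper

universe u

/-! ### Vanishing of Ext and the long exact sequences -/

section Ext

variable {S : Type u} [Ring S]
variable {A B C M N : Type u} [AddCommGroup A] [Module S A] [AddCommGroup B] [Module S B]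
  [AddCommGroup C] [Module S C] [AddCommGroup M] [Module S M] [AddCommGroup N] [Module S N]

/-- `0 → A → B → C → 0` is a short exact sequence of modules, stated for unbundled modules. -/
structure IsShortExact (f : A →ₗ[S] B) (g : B →ₗ[S] C) : Prop where
  injective : Function.Injective f
  surjective : Function.Surjective g
  exact : Function.Exact f g

variable (S) in
/-- The vanishing `Ext^i_S(A, B) = 0`, for unbundled modules. -/
def ExtVanishes (i : ℕ) (A B : Type u) [AddCommGroup A] [Module S A] [AddCommGroup B]
    [Module S B] : Prop :=
  Subsingleton (Abelian.Ext (ModuleCat.of S A) (ModuleCat.of S B) i)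

theorem extVanishes_iff {i : ℕ} : ExtVanishes S i A B ↔
    ∀ x : Abelian.Ext (ModuleCat.of S A) (ModuleCat.of S B) i, x = 0 :=
  subsingleton_iff_forall_eq _

theorem extVanishes_zero_iff : ExtVanishes S 0 A B ↔ ∀ f : A →ₗ[S] B, f = 0 := by
  rw [ExtVanishes, (Abelian.Ext.addEquiv₀.toEquiv.trans ModuleCat.homEquiv).subsingleton_congr]
  exact subsingleton_iff_forall_eq 0

theorem extVanishes_succ_of_projective (i : ℕ) [Module.Projective S A] :
    ExtVanishes S (i + 1) A B :=
  have : Projective (ModuleCat.of S A) := (IsProjective.iff_projective A).1 inferInstance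
  Abelian.Ext.subsingleton_of_projective _ _ i

theorem extVanishes_succ_of_injective (i : ℕ) (hB : Module.Injective S B) :
    ExtVanishes S (i + 1) A B :=
  have : Injective (ModuleCat.of S B) := (Module.injective_iff_injective_object S B).1 hB
  Abelian.Ext.subsingleton_of_injective _ _ i

namespace ExtVanishes

variable {i : ℕ}

theorem retract_right (h : ExtVanishes S i M B) (r : B →ₗ[S] A) (s : A →ₗ[S] B)
    (hrs : r ∘ₗ s = LinearMap.id) : ExtVanishes S i M A := by
  rw [extVanishes_iff] at *
  intro x
  rw [← Abelian.Ext.comp_mk₀_id x, ← ModuleCat.ofHom_id, ← hrs, ModuleCat.ofHom_comp,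
    ← Abelian.Ext.mk₀_comp_mk₀, ← Abelian.Ext.comp_assoc_of_third_deg_zero,
    h (x.comp _ _), Abelian.Ext.zero_comp]

theorem retract_left (h : ExtVanishes S i B N) (r : B →ₗ[S] A) (s : A →ₗ[S] B)
    (hrs : r ∘ₗ s = LinearMap.id) : ExtVanishes S i A N := by
  rw [extVanishes_iff] at *
  intro x
  rw [← Abelian.Ext.mk₀_id_comp x, ← ModuleCat.ofHom_id, ← hrs, ModuleCat.ofHom_comp,
    ← Abelian.Ext.mk₀_comp_mk₀, Abelian.Ext.comp_assoc_of_second_deg_zero,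
    h (.comp _ x _), Abelian.Ext.comp_zero]

theorem congr_left (h : ExtVanishes S i B N) (e : A ≃ₗ[S] B) : ExtVanishes S i A N :=
  h.retract_left e.symm.toLinearMap e.toLinearMap e.symm_comp

theorem congr_right (h : ExtVanishes S i M B) (e : A ≃ₗ[S] B) : ExtVanishes S i M A :=
  h.retract_right e.symm.toLinearMap e.toLinearMap e.symm_comp

theorem of_subsingleton_left [Subsingleton A] : ExtVanishes S i A B := by
  rw [extVanishes_iff]
  intro x
  have h : 𝟙 (ModuleCat.of S A) = 0 :=
    (ModuleCat.isZero_of_subsingleton _).eq_of_src _ _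
  rw [← Abelian.Ext.mk₀_id_comp x, h, Abelian.Ext.mk₀_zero, Abelian.Ext.zero_comp]

theorem of_subsingleton_right [Subsingleton B] : ExtVanishes S i A B := by
  rw [extVanishes_iff]
  intro x
  have h : 𝟙 (ModuleCat.of S B) = 0 :=
    (ModuleCat.isZero_of_subsingleton _).eq_of_src _ _
  rw [← Abelian.Ext.comp_mk₀_id x, h, Abelian.Ext.mk₀_zero, Abelian.Ext.comp_zero]

end ExtVanishes

theorem isShortExact_subtype_mkQ (K : Submodule S B) : IsShortExact K.subtype K.mkQ :=
  ⟨K.injective_subtype, K.mkQ_surjective, LinearMap.exact_subtype_mkQ K⟩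

theorem isShortExact_mkQ_range {f : A →ₗ[S] B} (hf : Function.Injective f) :
    IsShortExact f (LinearMap.range f).mkQ :=
  ⟨hf, Submodule.mkQ_surjective _, LinearMap.exact_map_mkQ_range f⟩

theorem isShortExact_ker_subtype {g : B →ₗ[S] C} (hg : Function.Surjective g) :
    IsShortExact (LinearMap.ker g).subtype g :=
  ⟨Submodule.injective_subtype _, hg, LinearMap.exact_subtype_ker_map g⟩

namespace IsShortExact

variable {f : A →ₗ[S] B} {g : B →ₗ[S] C} {i : ℕ}

theorem exists_comp_eq_left (h : IsShortExact f g) (u : M →ₗ[S] B) (hu : g ∘ₗ u = 0) :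
    ∃ v : M →ₗ[S] A, f ∘ₗ v = u :=
  have hmem (x : M) : u x ∈ LinearMap.range f := (h.exact (u x)).1 (LinearMap.congr_fun hu x)
  let e := LinearEquiv.ofInjective f h.injective
  ⟨e.symm.toLinearMap ∘ₗ u.codRestrict _ hmem, LinearMap.ext fun x ↦
    congrArg Subtype.val (e.apply_symm_apply (u.codRestrict _ hmem x))⟩

theorem exists_comp_eq_right (h : IsShortExact f g) (u : B →ₗ[S] N) (hu : u ∘ₗ f = 0) :
    ∃ v : C →ₗ[S] N, v ∘ₗ g = u := by
  have hle : LinearMap.range f ≤ LinearMap.ker u := LinearMap.range_le_ker_iff.2 hu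
  refine ⟨(LinearMap.range f).liftQ u hle ∘ₗ
    (h.exact.linearEquivOfSurjective h.surjective).symm.toLinearMap, ?_⟩
  ext x
  simp [Function.Exact.linearEquivOfSurjective_symm_apply]

theorem codRestrict_comap (h : IsShortExact f g) (R : Submodule S C) :
    IsShortExact (f.codRestrict (R.comap g) fun x ↦ by simp [h.exact.apply_apply_eq_zero])
      (g.restrict (p := R.comap g) (q := R) fun _ hx ↦ hx) := by
  refine ⟨fun x y hxy ↦ h.injective (congrArg Subtype.val hxy), fun ⟨z, hz⟩ ↦ ?_, fun y ↦ ?_⟩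
  · obtain ⟨y, rfl⟩ := h.surjective z
    exact ⟨⟨y, hz⟩, rfl⟩
  · refine Subtype.ext_iff.trans ((h.exact y).trans (exists_congr fun x ↦ ?_))
    exact ⟨fun hx ↦ Subtype.ext hx, congrArg Subtype.val⟩

theorem subtype_comap (h : IsShortExact f g) (R : Submodule S C) :
    IsShortExact (R.comap g).subtype (R.mkQ ∘ₗ g) := by
  refine ⟨Submodule.injective_subtype _, (Submodule.mkQ_surjective R).comp h.surjective, ?_⟩
  rw [LinearMap.exact_iff, LinearMap.ker_comp, R.ker_mkQ, Submodule.range_subtype]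

theorem exists_shortComplex (h : IsShortExact f g) :
    ∃ w, (ShortComplex.mk (ModuleCat.ofHom f) (ModuleCat.ofHom g) w).ShortExact := by
  refine ⟨by rw [← ModuleCat.ofHom_comp, h.exact.linearMap_comp_eq_zero, ModuleCat.ofHom_zero], ?_⟩
  have := (ModuleCat.mono_iff_injective (ModuleCat.ofHom f)).2 h.injective
  have := (ModuleCat.epi_iff_surjective (ModuleCat.ofHom g)).2 h.surjective
  exact .mk ((ShortComplex.ShortExact.moduleCat_exact_iff_function_exact _).2 h.exact)

theorem extVanishes_to_middle (h : IsShortExact f g) (hA : ExtVanishes S i M A)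
    (hC : ExtVanishes S i M C) : ExtVanishes S i M B := by
  obtain ⟨w, hs⟩ := h.exists_shortComplex
  rw [extVanishes_iff] at *
  intro x
  obtain ⟨y, rfl⟩ := Abelian.Ext.covariant_sequence_exact₂ _ hs x (hC _)
  rw [hA y, Abelian.Ext.zero_comp]

theorem extVanishes_to_right (h : IsShortExact f g) (hB : ExtVanishes S i M B)
    (hA : ExtVanishes S (i + 1) M A) : ExtVanishes S i M C := by
  obtain ⟨w, hs⟩ := h.exists_shortComplex
  rw [extVanishes_iff] at *
  intro x
  obtain ⟨y, rfl⟩ := Abelian.Ext.covariant_sequence_exact₃ _ hs x rfl (hA _)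
  rw [hB y, Abelian.Ext.zero_comp]

theorem extVanishes_to_left (h : IsShortExact f g) (hC : ExtVanishes S i M C)
    (hB : ExtVanishes S (i + 1) M B) : ExtVanishes S (i + 1) M A := by
  obtain ⟨w, hs⟩ := h.exists_shortComplex
  rw [extVanishes_iff] at *
  intro x
  obtain ⟨y, rfl⟩ := Abelian.Ext.covariant_sequence_exact₁ _ hs x (hB _) rfl
  rw [hC y, Abelian.Ext.zero_comp]

theorem extVanishes_from_middle (h : IsShortExact f g) (hA : ExtVanishes S i A N)
    (hC : ExtVanishes S i C N) : ExtVanishes S i B N := by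
  obtain ⟨w, hs⟩ := h.exists_shortComplex
  rw [extVanishes_iff] at *
  intro x
  obtain ⟨y, rfl⟩ := Abelian.Ext.contravariant_sequence_exact₂ hs _ x (hA _)
  rw [hC y, Abelian.Ext.comp_zero]

theorem extVanishes_from_left (h : IsShortExact f g) (hB : ExtVanishes S i B N)
    (hC : ExtVanishes S (i + 1) C N) : ExtVanishes S i A N := by
  obtain ⟨w, hs⟩ := h.exists_shortComplex
  rw [extVanishes_iff] at *
  intro x
  obtain ⟨y, rfl⟩ := Abelian.Ext.contravariant_sequence_exact₁ hs _ x (add_comm 1 i) (hC _)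
  rw [hB y, Abelian.Ext.comp_zero]

theorem extVanishes_from_right (h : IsShortExact f g) (hA : ExtVanishes S i A N)
    (hB : ExtVanishes S (i + 1) B N) : ExtVanishes S (i + 1) C N := by
  obtain ⟨w, hs⟩ := h.exists_shortComplex
  rw [extVanishes_iff] at *
  intro x
  obtain ⟨y, rfl⟩ := Abelian.Ext.contravariant_sequence_exact₃ hs _ x (hB _) (add_comm 1 i)
  rw [hA y, Abelian.Ext.comp_zero]

theorem exists_lift (h : IsShortExact f g) (hA : ExtVanishes S 1 M A) (u : M →ₗ[S] C) :
    ∃ v : M →ₗ[S] B, g ∘ₗ v = u := by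
  obtain ⟨w, hs⟩ := h.exists_shortComplex
  obtain ⟨y, hy⟩ := Abelian.Ext.covariant_sequence_exact₃ _ hs
    (Abelian.Ext.mk₀ (ModuleCat.ofHom u)) rfl (extVanishes_iff.1 hA _)
  obtain ⟨v, rfl⟩ := (Abelian.Ext.mk₀_bijective _ _).2 y
  rw [Abelian.Ext.mk₀_comp_mk₀] at hy
  exact ⟨v.hom, congrArg ModuleCat.Hom.hom ((Abelian.Ext.mk₀_bijective _ _).1 hy)⟩

theorem exists_extension (h : IsShortExact f g) (hC : ExtVanishes S 1 C N) (u : A →ₗ[S] N) :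
    ∃ v : B →ₗ[S] N, v ∘ₗ f = u := by
  obtain ⟨w, hs⟩ := h.exists_shortComplex
  obtain ⟨y, hy⟩ := Abelian.Ext.contravariant_sequence_exact₁ hs _
    (Abelian.Ext.mk₀ (ModuleCat.ofHom u)) rfl (extVanishes_iff.1 hC _)
  obtain ⟨v, rfl⟩ := (Abelian.Ext.mk₀_bijective _ _).2 y
  rw [Abelian.Ext.mk₀_comp_mk₀] at hy
  exact ⟨v.hom, congrArg ModuleCat.Hom.hom ((Abelian.Ext.mk₀_bijective _ _).1 hy)⟩

theorem extVanishes_one_to_left (h : IsShortExact f g) (hB : ExtVanishes S 1 M B)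
    (lift : ∀ u : M →ₗ[S] C, ∃ v : M →ₗ[S] B, g ∘ₗ v = u) : ExtVanishes S 1 M A := by
  obtain ⟨w, hs⟩ := h.exists_shortComplex
  rw [extVanishes_iff] at *
  intro x
  obtain ⟨y, rfl⟩ := Abelian.Ext.covariant_sequence_exact₁ _ hs x (hB _) (n₀ := 0) rfl
  obtain ⟨u, rfl⟩ := (Abelian.Ext.mk₀_bijective _ _).2 y
  obtain ⟨v, hv⟩ := lift u.hom
  obtain rfl : ModuleCat.ofHom v ≫ ModuleCat.ofHom g = u := by rw [← ModuleCat.ofHom_comp, hv]; rfl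
  rw [← Abelian.Ext.mk₀_comp_mk₀, Abelian.Ext.comp_assoc_of_second_deg_zero]
  exact (congrArg (Abelian.Ext.comp _ · rfl) hs.comp_extClass).trans (Abelian.Ext.comp_zero ..)

end IsShortExact

end Ext

/-! ### Composition factors and supports -/

theorem isShortExact_inclusion_mkQ {S X : Type u} [Ring S] [AddCommGroup X] [Module S X]
    {A B : Submodule S X} (h : A ≤ B) :
    IsShortExact (Submodule.inclusion h) (A.comap B.subtype).mkQ :=
  ⟨Submodule.inclusion_injective h, Submodule.mkQ_surjective _, by
    rw [LinearMap.exact_iff, Submodule.range_inclusion, Submodule.ker_mkQ]⟩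

theorem ne_zero_of_surjective {S A B : Type u} [Ring S] [AddCommGroup A] [Module S A]
    [AddCommGroup B] [Module S B] [Nontrivial B] {f : A →ₗ[S] B} (hf : Function.Surjective f) :
    f ≠ 0 := by
  rintro rfl
  obtain ⟨y, hy⟩ := exists_ne (0 : B)
  obtain ⟨x, rfl⟩ := hf y
  exact hy rfl

theorem ne_zero_of_injective {S A B : Type u} [Ring S] [AddCommGroup A] [Module S A]
    [AddCommGroup B] [Module S B] [Nontrivial A] {f : A →ₗ[S] B} (hf : Function.Injective f) :
    f ≠ 0 := by
  rintro rfl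
  obtain ⟨x, hx⟩ := exists_ne (0 : A)
  exact hx (hf rfl)

theorem injective_of_essential {S A B C : Type u} [Ring S] [AddCommGroup A] [Module S A]
    [AddCommGroup B] [Module S B] [AddCommGroup C] [Module S C] {ι : A →ₗ[S] B} {f : B →ₗ[S] C}
    (hι : ∀ N : Submodule S B, N ⊓ LinearMap.range ι = ⊥ → N = ⊥)
    (hf : Function.Injective (f ∘ₗ ι)) : Function.Injective f := by
  refine LinearMap.ker_eq_bot.1 (hι _ (eq_bot_iff.2 ?_))
  rintro _ ⟨hx, y, rfl⟩
  obtain rfl : y = 0 := (injective_iff_map_eq_zero _).1 hf y hx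
  exact ι.map_zero

namespace QHData

variable {S : Type} [Ring S] {Λ : Type} [Fintype Λ] [PartialOrder Λ]

/-- `L κ` is a composition factor of `X`, encoded as `Hom(P κ, X) ≠ 0`; see
`isFactor_iff_isCompFactor`. -/
def IsFactor (Q : QHData S Λ) (κ : Λ) (X : Type) [AddCommGroup X] [Module S X] : Prop :=
  ∃ f : Q.P κ →ₗ[S] X, f ≠ 0

/-- All composition factors of `X` are of the form `L κ` with `κ ∈ Γ`. -/
def SupportedOn (Q : QHData S Λ) (Γ : Set Λ) (X : Type) [AddCommGroup X] [Module S X] : Prop :=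
  ∀ κ, Q.IsFactor κ X → κ ∈ Γ

variable {Q : QHData S Λ} {κ μ : Λ} {Γ : Set Λ}
variable {A B C X Y : Type} [AddCommGroup A] [Module S A] [AddCommGroup B] [Module S B]
  [AddCommGroup C] [Module S C] [AddCommGroup X] [Module S X] [AddCommGroup Y] [Module S Y]

instance (κ : Λ) : IsSimpleModule S (Q.L κ) := Q.simpleL κ

instance (κ : Λ) : Module.Finite S (Q.L κ) := Q.finiteL κ

instance (κ : Λ) : Nontrivial (Q.L κ) := IsSimpleModule.nontrivial S _

instance (κ : Λ) : Module.Projective S (Q.P κ) := (Q.projCover κ).1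

theorem exists_projective_cover (Q : QHData S Λ) (κ : Λ) : ∃ π : Q.P κ →ₗ[S] Q.L κ,
    Function.Surjective π ∧ ∀ N : Submodule S (Q.P κ), N ≠ ⊤ → N ≤ LinearMap.ker π := by
  obtain ⟨-, π, hπ, hsuperfluous⟩ := Q.projCover κ
  refine ⟨π, hπ, fun N hN ↦ by_contra fun hle ↦ hN (hsuperfluous N ?_)⟩
  exact (LinearMap.isCoatom_ker_of_surjective hπ).2 _ (right_lt_sup.2 hle)

instance (κ : Λ) : Module.Finite S (Q.P κ) := by
  obtain ⟨π, hπ, hker⟩ := Q.exists_projective_cover κ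
  obtain ⟨x, hx⟩ := exists_ne (0 : Q.L κ)
  obtain ⟨y, rfl⟩ := hπ x
  have hspan : Submodule.span S {y} = ⊤ :=
    by_contra fun h ↦ hx (hker _ h (Submodule.mem_span_singleton_self y))
  exact ⟨⟨{y}, by simpa using hspan⟩⟩

namespace IsFactor

theorem of_injective (h : Q.IsFactor κ X) (f : X →ₗ[S] Y) (hf : Function.Injective f) :
    Q.IsFactor κ Y := by
  obtain ⟨u, hu⟩ := h
  exact ⟨f ∘ₗ u, fun h0 ↦ hu (LinearMap.cancel_left hf |>.1 (h0.trans f.comp_zero.symm))⟩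

theorem of_surjective (h : Q.IsFactor κ Y) (f : X →ₗ[S] Y) (hf : Function.Surjective f) :
    Q.IsFactor κ X := by
  obtain ⟨u, hu⟩ := h
  obtain ⟨v, rfl⟩ := Module.projective_lifting_property f u hf
  exact ⟨v, fun h0 ↦ hu (by rw [h0, LinearMap.comp_zero])⟩

theorem congr (h : Q.IsFactor κ X) (e : X ≃ₗ[S] Y) : Q.IsFactor κ Y :=
  h.of_injective e.toLinearMap e.injective

theorem left_or_right (h : Q.IsFactor κ B) {f : A →ₗ[S] B} {g : B →ₗ[S] C}
    (hfg : IsShortExact f g) : Q.IsFactor κ A ∨ Q.IsFactor κ C := by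
  obtain ⟨u, hu⟩ := h
  by_cases hgu : g ∘ₗ u = 0
  · obtain ⟨v, rfl⟩ := hfg.exists_comp_eq_left u hgu
    exact .inl ⟨v, fun h0 ↦ hu (by rw [h0, LinearMap.comp_zero])⟩
  · exact .inr ⟨_, hgu⟩

theorem nontrivial (h : Q.IsFactor κ X) : Nontrivial X := by
  obtain ⟨f, hf⟩ := h
  exact not_subsingleton_iff_nontrivial.1 fun _ ↦ hf (Subsingleton.elim _ _)

theorem nonempty_linearEquiv [IsSimpleModule S X] (h : Q.IsFactor κ X) :
    Nonempty (X ≃ₗ[S] Q.L κ) := by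
  obtain ⟨f, hf⟩ := h
  obtain ⟨π, hπ, hker⟩ := Q.exists_projective_cover κ
  have hf_surj := f.surjective_or_eq_zero.resolve_right hf
  obtain ⟨v, hv⟩ := (isShortExact_ker_subtype hf_surj).exists_comp_eq_right π <|
    LinearMap.ext fun x ↦ hker _ (mt LinearMap.ker_eq_top.1 hf) x.2
  have hv_surj : Function.Surjective v := .of_comp (g := f) (by rwa [← LinearMap.coe_comp, hv])
  exact ⟨.ofBijective v (LinearMap.bijective_of_ne_zero (ne_zero_of_surjective hv_surj))⟩

end IsFactor

theorem isFactor_L_iff : Q.IsFactor κ (Q.L μ) ↔ κ = μ := by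
  constructor
  · rintro h
    by_contra hne
    exact h.nonempty_linearEquiv.elim (Q.nonisoL μ κ (Ne.symm hne)).false
  · rintro rfl
    obtain ⟨π, hπ, -⟩ := Q.exists_projective_cover κ
    exact ⟨π, ne_zero_of_surjective hπ⟩

theorem isFactor_of_linearEquiv (e : X ≃ₗ[S] Q.L κ) : Q.IsFactor κ X :=
  (isFactor_L_iff.2 rfl).congr e.symm

theorem isFactor_iff_exists_surjective : Q.IsFactor κ X ↔
    ∃ (N : Submodule S X) (q : N →ₗ[S] Q.L κ), Function.Surjective q := by
  constructor
  · rintro ⟨f, hf⟩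
    obtain ⟨π, hπ, hker⟩ := Q.exists_projective_cover κ
    have hexact := isShortExact_ker_subtype f.surjective_rangeRestrict
    obtain ⟨q, hq⟩ := hexact.exists_comp_eq_right π <| LinearMap.ext fun x ↦
      hker (LinearMap.ker f) (mt LinearMap.ker_eq_top.1 hf) (by simpa using x.2)
    exact ⟨LinearMap.range f, q, .of_comp (g := f.rangeRestrict)
      (by rwa [← LinearMap.coe_comp, hq])⟩
  · rintro ⟨N, q, hq⟩
    exact ((isFactor_L_iff.2 rfl).of_surjective q hq).of_injective N.subtype N.injective_subtype

theorem isFactor_iff_isCompFactor :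
    Q.IsFactor κ X ↔ IsCompFactor S (Q.L κ) (ModuleCat.of S X) := by
  rw [isFactor_iff_exists_surjective]
  constructor
  · rintro ⟨N, q, hq⟩
    refine ⟨(LinearMap.ker q).map N.subtype, N, Submodule.map_subtype_le N _, ⟨?_⟩⟩
    exact Submodule.quotEquivOfEq _ _
      (Submodule.comap_map_eq_of_injective N.injective_subtype _) ≪≫ₗ q.quotKerEquivOfSurjective hq
  · rintro ⟨A, B, -, ⟨e⟩⟩
    exact ⟨B, e.toLinearMap ∘ₗ Submodule.mkQ _, e.surjective.comp (Submodule.mkQ_surjective _)⟩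

theorem supportedOn_L_iff : Q.SupportedOn Γ (Q.L κ) ↔ κ ∈ Γ :=
  ⟨fun h ↦ h κ (isFactor_L_iff.2 rfl), fun h _ hμ ↦ isFactor_L_iff.1 hμ ▸ h⟩

namespace SupportedOn

theorem mono {Γ' : Set Λ} (h : Q.SupportedOn Γ X) (hΓ : Γ ⊆ Γ') : Q.SupportedOn Γ' X :=
  fun κ hκ ↦ hΓ (h κ hκ)

theorem of_injective (h : Q.SupportedOn Γ Y) (f : X →ₗ[S] Y) (hf : Function.Injective f) :
    Q.SupportedOn Γ X :=
  fun κ hκ ↦ h κ (hκ.of_injective f hf)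

theorem of_surjective (h : Q.SupportedOn Γ X) (f : X →ₗ[S] Y) (hf : Function.Surjective f) :
    Q.SupportedOn Γ Y :=
  fun κ hκ ↦ h κ (hκ.of_surjective f hf)

theorem submodule (h : Q.SupportedOn Γ X) (N : Submodule S X) : Q.SupportedOn Γ N :=
  h.of_injective N.subtype N.injective_subtype

theorem of_shortExact {f : A →ₗ[S] B} {g : B →ₗ[S] C} (hA : Q.SupportedOn Γ A)
    (hC : Q.SupportedOn Γ C) (hfg : IsShortExact f g) : Q.SupportedOn Γ B :=
  fun κ hκ ↦ (hκ.left_or_right hfg).elim (hA κ) (hC κ)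

theorem sup {M N : Submodule S X} (hM : Q.SupportedOn Γ M) (hN : Q.SupportedOn Γ N) :
    Q.SupportedOn Γ (M ⊔ N : Submodule S X) := by
  have hprod : Q.SupportedOn Γ (M × N) := hM.of_shortExact hN
    ⟨LinearMap.inl_injective, LinearMap.snd_surjective, Function.Exact.inl_snd⟩
  rw [Submodule.sup_eq_range]
  exact hprod.of_surjective _ (LinearMap.surjective_rangeRestrict _)

theorem comap_mkQ {R : Submodule S X} {W : Submodule S (X ⧸ R)} (hR : Q.SupportedOn Γ R)
    (hW : Q.SupportedOn Γ W) : Q.SupportedOn Γ (W.comap R.mkQ) :=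
  hR.of_shortExact hW ((isShortExact_subtype_mkQ R).codRestrict_comap W)

end SupportedOn

variable (Q Γ X) in
theorem exists_isGreatest_supportedOn [IsNoetherian S X] :
    ∃ R, IsGreatest {N : Submodule S X | Q.SupportedOn Γ N} R := by
  obtain ⟨R, hR, hmax⟩ := set_has_maximal_iff_noetherian.2 ‹IsNoetherian S X›
    {N : Submodule S X | Q.SupportedOn Γ N} ⟨⊥, fun κ hκ ↦
      absurd hκ.nontrivial (not_nontrivial _)⟩
  refine ⟨R, hR, fun N hN ↦ ?_⟩
  exact le_sup_right.trans (not_lt_iff_le_imp_ge.1 (hmax (R ⊔ N) (hR.sup hN)) le_sup_left)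

theorem extVanishes_zero_quotient_of_isGreatest {R : Submodule S X}
    (hR : IsGreatest {N : Submodule S X | Q.SupportedOn Γ N} R) (hA : Q.SupportedOn Γ A) :
    ExtVanishes S 0 A (X ⧸ R) := by
  refine extVanishes_zero_iff.2 fun f ↦ LinearMap.range_eq_bot.1 ?_
  have hf := SupportedOn.comap_mkQ hR.1
    (hA.of_surjective f.rangeRestrict f.surjective_rangeRestrict)
  rw [← Submodule.map_comap_eq_of_surjective R.mkQ_surjective (LinearMap.range f), eq_bot_iff,
    Submodule.map_le_iff_le_comap, ← LinearMap.ker, R.ker_mkQ]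
  exact hR.2 hf

theorem exists_injective_from_L [IsArtinian S X] [Nontrivial X] (Q : QHData S Λ) :
    ∃ (κ : Λ) (f : Q.L κ →ₗ[S] X), Function.Injective f := by
  obtain ⟨N, hN, -⟩ := (eq_bot_or_exists_atom_le (⊤ : Submodule S X)).resolve_left top_ne_bot
  have := isSimpleModule_iff_isAtom.2 hN
  obtain ⟨κ, ⟨e⟩⟩ := Q.fullL (ModuleCat.of S N) this
  exact ⟨κ, N.subtype ∘ₗ e.symm.toLinearMap, N.injective_subtype.comp e.symm.injective⟩

theorem devissage [IsArtinianRing S] [Module.Finite S X]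
    {p : ∀ (X : Type) [AddCommGroup X] [Module S X], Prop}
    (subsingleton : ∀ (X : Type) [AddCommGroup X] [Module S X], Subsingleton X → p X)
    (congr : ∀ (X Y : Type) [AddCommGroup X] [Module S X] [AddCommGroup Y] [Module S Y],
      (X ≃ₗ[S] Y) → p Y → p X)
    (extension : ∀ (X : Type) [AddCommGroup X] [Module S X] (N : Submodule S X),
      p N → p (X ⧸ N) → p X)
    (hL : ∀ κ, Q.IsFactor κ X → p (Q.L κ)) : p X := by
  have hX : IsFiniteLength S X :=
    isFiniteLength_iff_isNoetherian_isArtinian.2 ⟨inferInstance, inferInstance⟩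
  induction hX with
  | of_subsingleton => exact subsingleton _ inferInstance
  | @of_simple_quotient M _ _ N hsimple _ ih =>
    refine extension M N (ih fun κ hκ ↦ hL κ (hκ.of_injective _ N.injective_subtype)) ?_
    obtain ⟨κ, ⟨e : (M ⧸ N) ≃ₗ[S] Q.L κ⟩⟩ := Q.fullL (ModuleCat.of S (M ⧸ N)) hsimple
    exact congr _ _ e (hL κ ((isFactor_of_linearEquiv e).of_surjective _ N.mkQ_surjective))

theorem extVanishes_of_factors_left [IsArtinianRing S] [Module.Finite S X] {i : ℕ}
    (h : ∀ κ, Q.IsFactor κ X → ExtVanishes S i (Q.L κ) Y) : ExtVanishes S i X Y :=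
  devissage (p := fun X _ _ ↦ ExtVanishes S i X Y) (fun _ _ _ _ ↦ .of_subsingleton_left)
    (fun _ _ _ _ _ _ e hY ↦ hY.congr_left e)
    (fun _ _ _ N ↦ (isShortExact_subtype_mkQ N).extVanishes_from_middle) h

theorem extVanishes_of_factors_right [IsArtinianRing S] [Module.Finite S X] {i : ℕ}
    (h : ∀ κ, Q.IsFactor κ X → ExtVanishes S i Y (Q.L κ)) : ExtVanishes S i Y X :=
  devissage (p := fun X _ _ ↦ ExtVanishes S i Y X) (fun _ _ _ _ ↦ .of_subsingleton_right)
    (fun _ _ _ _ _ _ e hY ↦ hY.congr_right e)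
    (fun _ _ _ N ↦ (isShortExact_subtype_mkQ N).extVanishes_to_middle) h

end QHData

/-! ### Standard and costandard modules -/

section Filtration

variable {S : Type} [Ring S] {X : ModuleCat.{0} S} {Y : Type} [AddCommGroup Y] [Module S Y] {n : ℕ}

theorem exists_range_le_succ_not_le_castSucc {f : Fin (n + 1) → Submodule S X} (hbot : f 0 = ⊥)
    (htop : f (Fin.last n) = ⊤) {h : Y →ₗ[S] X} (hh : h ≠ 0) :
    ∃ i : Fin n, LinearMap.range h ≤ f i.succ ∧ ¬ LinearMap.range h ≤ f i.castSucc := by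
  by_contra! hall
  suffices ∀ j, LinearMap.range h ≤ f j from
    hh (LinearMap.range_eq_bot.1 (le_bot_iff.1 (hbot ▸ this 0)))
  intro j
  induction j using Fin.reverseInduction with
  | last => exact htop ▸ le_top
  | cast i ih => exact hall i ih

theorem exists_ne_zero_to_subquot {A B : Submodule S X} {h : Y →ₗ[S] X}
    (hB : LinearMap.range h ≤ B) (hA : ¬ LinearMap.range h ≤ A) :
    ∃ u : Y →ₗ[S] subquot S A B, u ≠ 0 := by
  refine ⟨Submodule.mkQ _ ∘ₗ h.codRestrict B fun x ↦ hB ⟨x, rfl⟩, fun h0 ↦ hA ?_⟩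
  rintro _ ⟨x, rfl⟩
  simpa using LinearMap.congr_fun h0 x

theorem exists_surjective_of_subquot {A B : Submodule S X} (e : subquot S A B ≃ₗ[S] Y)
    (hB : B = ⊤) : ∃ p : X →ₗ[S] Y, Function.Surjective p ∧ LinearMap.ker p = A := by
  subst hB
  refine ⟨e.toLinearMap ∘ₗ Submodule.mkQ _ ∘ₗ Submodule.topEquiv.symm.toLinearMap,
    e.surjective.comp ((Submodule.mkQ_surjective _).comp Submodule.topEquiv.symm.surjective), ?_⟩
  ext x
  simp

theorem extVanishes_filtration_left {m : ℕ} {f : Fin (n + 1) → Submodule S X} (hf : Monotone f)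
    (hbot : f 0 = ⊥) (j : Fin (n + 1)) (h : ∀ i : Fin n, i.castSucc < j →
      ExtVanishes S m (subquot S (f i.castSucc) (f i.succ)) Y) : ExtVanishes S m (f j) Y := by
  induction j using Fin.induction with
  | zero => exact hbot ▸ ExtVanishes.of_subsingleton_left
  | succ j ih =>
    exact (isShortExact_inclusion_mkQ (hf j.castSucc_lt_succ.le)).extVanishes_from_middle
      (ih fun i hi ↦ h i (hi.trans j.castSucc_lt_succ)) (h j j.castSucc_lt_succ)

theorem extVanishes_filtration_right {m : ℕ} {f : Fin (n + 1) → Submodule S X} (hf : Monotone f)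
    (hbot : f 0 = ⊥) (j : Fin (n + 1)) (h : ∀ i : Fin n, i.castSucc < j →
      ExtVanishes S m Y (subquot S (f i.castSucc) (f i.succ))) : ExtVanishes S m Y (f j) := by
  induction j using Fin.induction with
  | zero => exact hbot ▸ ExtVanishes.of_subsingleton_right
  | succ j ih =>
    exact (isShortExact_inclusion_mkQ (hf j.castSucc_lt_succ.le)).extVanishes_to_middle
      (ih fun i hi ↦ h i (hi.trans j.castSucc_lt_succ)) (h j j.castSucc_lt_succ)

end Filtration

namespace QHData

variable {S : Type} [Ring S] {Λ : Type} [Fintype Λ] [PartialOrder Λ] {Q : QHData S Λ}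
variable {X : Type} [AddCommGroup X] [Module S X] {l ν : Λ}

section Standard

theorem exists_surjective_std_supportedOn (Q : QHData S Λ) (l : Λ) :
    (∃ p : Q.P l →ₗ[S] Q.std l, Function.Surjective p) ∧
      Q.SupportedOn (Set.Iic l) (Q.std l) := by
  obtain ⟨K, ⟨e⟩, hle, -⟩ := Q.stdSpec l
  exact ⟨⟨e.symm.toLinearMap ∘ₗ K.mkQ, e.symm.surjective.comp K.mkQ_surjective⟩,
    fun κ hκ ↦ hle κ (isFactor_iff_isCompFactor.1 (hκ.congr e))⟩

theorem supportedOn_std : Q.SupportedOn (Set.Iic l) (Q.std l) :=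
  (Q.exists_surjective_std_supportedOn l).2

instance (l : Λ) : Module.Finite S (Q.std l) :=
  have ⟨⟨p, hp⟩, _⟩ := Q.exists_surjective_std_supportedOn l
  Module.Finite.of_surjective p hp

theorem extVanishes_zero_std (h : ¬ Q.IsFactor l X) : ExtVanishes S 0 (Q.std l) X := by
  obtain ⟨⟨p, hp⟩, -⟩ := Q.exists_surjective_std_supportedOn l
  refine extVanishes_zero_iff.2 fun f ↦ by_contra fun hf ↦ h ⟨f ∘ₗ p, fun h0 ↦ hf ?_⟩
  exact (LinearMap.cancel_right hp).1 (h0.trans (LinearMap.zero_comp p).symm)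

theorem exists_subquot_of_compFactorMult_one {X : ModuleCat.{0} S}
    (hX : CompFactorMult S (Q.L l) X 1) : ∃ A B : Submodule S X,
      Nonempty (subquot S A B ≃ₗ[S] Q.L l) ∧ ∀ h : Q.P l →ₗ[S] X, h ≠ 0 →
        LinearMap.range h ≤ B ∧ ¬ LinearMap.range h ≤ A := by
  obtain ⟨n, f, -, hbot, htop, hsimple, hcard⟩ := hX
  obtain ⟨⟨hunique⟩, ⟨⟨i₀, hi₀⟩⟩⟩ := Nat.card_eq_one_iff_unique.1 hcard
  refine ⟨f i₀.castSucc, f i₀.succ, hi₀, fun h hh ↦ ?_⟩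
  obtain ⟨i, hB, hA⟩ := exists_range_le_succ_not_le_castSucc hbot htop hh
  have := hsimple i
  have hi : Q.IsFactor l (subquot S (f i.castSucc) (f i.succ)) := exists_ne_zero_to_subquot hB hA
  obtain rfl : i = i₀ := congrArg Subtype.val (hunique ⟨i, hi.nonempty_linearEquiv⟩ ⟨i₀, hi₀⟩)
  exact ⟨hB, hA⟩

theorem exists_surjective_std_L (Q : QHData S Λ) (l : Λ) : ∃ t : Q.std l →ₗ[S] Q.L l,
    Function.Surjective t ∧ Q.SupportedOn (Set.Iio l) (LinearMap.ker t) := by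
  obtain ⟨⟨p, hp⟩, hle⟩ := Q.exists_surjective_std_supportedOn l
  obtain ⟨A, B, ⟨e⟩, hrange⟩ := exists_subquot_of_compFactorMult_one (Q.multOne l)
  have hfactor : Q.IsFactor l (Q.std l) :=
    ((isFactor_of_linearEquiv e).of_surjective _ (Submodule.mkQ_surjective _)).of_injective
      B.subtype B.injective_subtype
  have : Nontrivial (Q.std l) := hfactor.nontrivial
  have hB : B = ⊤ := by
    rw [eq_top_iff, ← LinearMap.range_eq_top.2 hp]
    exact (hrange p (ne_zero_of_surjective hp)).1
  obtain ⟨t, ht, hker⟩ := exists_surjective_of_subquot e hB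
  refine ⟨t, ht, fun κ hκ ↦ lt_of_le_of_ne (hle.submodule _ κ hκ) ?_⟩
  rintro rfl
  obtain ⟨h, hh⟩ := hκ
  refine (hrange ((LinearMap.ker t).subtype ∘ₗ h) fun h0 ↦ hh ?_).2 ?_
  · exact (LinearMap.cancel_left (LinearMap.ker t).injective_subtype).1
      (h0.trans (LinearMap.comp_zero _).symm)
  · rw [← hker]
    rintro _ ⟨x, rfl⟩
    exact (h x).2

theorem exists_P_filtration_last (Q : QHData S Λ) (l : Λ) :
    ∃ (m : ℕ) (f : Fin (m + 2) → Submodule S (Q.P l)) (g : Fin (m + 1) → Λ),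
      HasFiltrationWithSections S (Q.P l) (m + 1) f (fun i ↦ Q.std (g i)) ∧
        g (Fin.last m) = l ∧ ∀ i ≠ Fin.last m, l < g i := by
  obtain ⟨n, f, g, hfilt, hge, hcard⟩ := Q.projFilt l
  obtain ⟨⟨hunique⟩, ⟨⟨i₀, hi₀⟩⟩⟩ := Nat.card_eq_one_iff_unique.1 hcard
  obtain ⟨m, rfl⟩ := Nat.exists_eq_succ_of_ne_zero (Fin.pos i₀).ne'
  obtain ⟨-, -, htop, hsec⟩ := id hfilt
  obtain ⟨e⟩ := hsec (Fin.last m)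
  obtain ⟨p, hp, -⟩ := exists_surjective_of_subquot e (by rw [Fin.succ_last, htop])
  obtain ⟨t, ht, -⟩ := Q.exists_surjective_std_L (g (Fin.last m))
  have hlast : l = g (Fin.last m) :=
    isFactor_L_iff.1 ⟨t ∘ₗ p, ne_zero_of_surjective (ht.comp hp)⟩
  refine ⟨m, f, g, hfilt, hlast.symm, fun i hi ↦ lt_of_le_of_ne (hge i) fun h ↦ hi ?_⟩
  exact congrArg Subtype.val (hunique ⟨i, h.symm⟩ ⟨Fin.last m, hlast.symm⟩)

theorem exists_isShortExact_P_std (Q : QHData S Λ) (l : Λ) :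
    ∃ (K : Submodule S (Q.P l)) (p : Q.P l →ₗ[S] Q.std l), IsShortExact K.subtype p ∧
      ∀ (i : ℕ) (Y : Type) [AddCommGroup Y] [Module S Y],
        (∀ κ, l < κ → ExtVanishes S i (Q.std κ) Y) → ExtVanishes S i K Y := by
  obtain ⟨m, f, g, ⟨hmono, hbot, htop, hsec⟩, hlast, hgt⟩ := Q.exists_P_filtration_last l
  obtain ⟨e⟩ : Nonempty (subquot S (f (Fin.last m).castSucc) (f (Fin.last m).succ) ≃ₗ[S]
    Q.std l) := hlast ▸ hsec (Fin.last m)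
  obtain ⟨p, hp, hker⟩ := exists_surjective_of_subquot e (by rw [Fin.succ_last, htop])
  refine ⟨LinearMap.ker p, p, isShortExact_ker_subtype hp, fun i Y _ _ hY ↦ ?_⟩
  rw [hker]
  refine extVanishes_filtration_left hmono hbot _ fun j hj ↦ ?_
  obtain ⟨e'⟩ := hsec j
  exact (hY _ (hgt j (Fin.castSucc_lt_castSucc_iff.1 hj).ne)).congr_left e'

theorem extVanishes_std_succ_of_forall_gt {i : ℕ}
    (h : ∀ κ, l < κ → ExtVanishes S i (Q.std κ) X) : ExtVanishes S (i + 1) (Q.std l) X :=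
  have ⟨_, _, hp, hK⟩ := Q.exists_isShortExact_P_std l
  hp.extVanishes_from_right (hK i X h) (extVanishes_succ_of_projective i)

theorem extVanishes_std_succ_of_supportedOn (hX : Q.SupportedOn (Set.Ioi l)ᶜ X) (i : ℕ) :
    ExtVanishes S (i + 1) (Q.std l) X := by
  refine extVanishes_std_succ_of_forall_gt fun κ hκ ↦ ?_
  induction i generalizing l κ with
  | zero => exact extVanishes_zero_std fun h ↦ hX κ h hκ
  | succ i ih =>
    exact extVanishes_std_succ_of_forall_gt fun ρ hρ ↦ ih hX ρ (hκ.trans hρ)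

theorem extVanishes_std_of_ncard_Ioi_lt {i : ℕ} (hi : (Set.Ioi l).ncard < i) :
    ExtVanishes S i (Q.std l) X := by
  induction i generalizing l with
  | zero => exact absurd hi (Nat.not_lt_zero _)
  | succ i ih =>
    refine extVanishes_std_succ_of_forall_gt fun κ hκ ↦ ih ?_
    exact (Set.ncard_lt_ncard (Set.Ioi_ssubset_Ioi hκ)).trans_le (Nat.lt_succ_iff.1 hi)

theorem extVanishes_std_of_card_lt {i : ℕ} (hi : Nat.card Λ < i) : ExtVanishes S i (Q.std l) X :=
  extVanishes_std_of_ncard_Ioi_lt ((Set.ncard_le_card _).trans_lt hi)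

end Standard

section Costandard

theorem exists_injective_costd_I (Q : QHData S Λ) (l : Λ) : ∃ j : Q.costd l →ₗ[S] Q.I l,
    Function.Injective j ∧
      IsGreatest {N : Submodule S (Q.I l) | Q.SupportedOn (Set.Iic l) N}
        (LinearMap.range j) := by
  obtain ⟨V, ⟨e⟩, hle, hmax⟩ := Q.costdSpec l
  have hrange : LinearMap.range (V.subtype ∘ₗ e.toLinearMap) = V := by
    rw [LinearMap.range_comp, LinearEquiv.range, Submodule.map_top, V.range_subtype]
  refine ⟨V.subtype ∘ₗ e.toLinearMap, V.injective_subtype.comp e.injective, ?_⟩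
  rw [hrange]
  exact ⟨fun κ hκ ↦ hle κ (isFactor_iff_isCompFactor.1 hκ),
    fun W hW ↦ hmax W fun κ hκ ↦ hW κ (isFactor_iff_isCompFactor.2 hκ)⟩

theorem supportedOn_costd : Q.SupportedOn (Set.Iic l) (Q.costd l) :=
  have ⟨j, hj, hmax⟩ := Q.exists_injective_costd_I l
  hmax.1.of_injective _ (LinearEquiv.ofInjective j hj).injective

theorem extVanishes_one_costd (hX : Q.SupportedOn (Set.Iic l) X) :
    ExtVanishes S 1 X (Q.costd l) := by
  obtain ⟨j, hj, hmax⟩ := Q.exists_injective_costd_I l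
  refine (isShortExact_mkQ_range hj).extVanishes_one_to_left
    (extVanishes_succ_of_injective 0 (Q.injHull l).1) fun u ↦ ⟨0, ?_⟩
  rw [extVanishes_zero_iff.1 (extVanishes_zero_quotient_of_isGreatest hmax hX) u,
    LinearMap.comp_zero]

theorem extVanishes_std_succ_costd (Q : QHData S Λ) (l ν : Λ) (i : ℕ) :
    ExtVanishes S (i + 1) (Q.std l) (Q.costd ν) := by
  induction i generalizing l with
  | zero =>
    by_cases hl : l ≤ ν
    · exact extVanishes_one_costd (supportedOn_std.mono (Set.Iic_subset_Iic.2 hl))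
    · exact extVanishes_std_succ_of_supportedOn
        (supportedOn_costd.mono fun κ hκ h ↦ hl ((Set.mem_Ioi.1 h).le.trans hκ)) 0
  | succ i ih => exact extVanishes_std_succ_of_forall_gt fun κ _ ↦ ih κ

theorem exists_essential_L_costd (Q : QHData S Λ) (l : Λ) : ∃ ι : Q.L l →ₗ[S] Q.costd l,
    Function.Injective ι ∧
      ∀ N : Submodule S (Q.costd l), N ⊓ LinearMap.range ι = ⊥ → N = ⊥ := by
  obtain ⟨j, hj, hmax⟩ := Q.exists_injective_costd_I l
  obtain ⟨-, ι, hι, hessential⟩ := Q.injHull l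
  have hle : LinearMap.range ι ≤ LinearMap.range j :=
    hmax.2 ((supportedOn_L_iff.2 (Set.mem_Iic.2 le_rfl)).of_surjective _ ι.surjective_rangeRestrict)
  obtain ⟨v, rfl⟩ := (isShortExact_mkQ_range hj).exists_comp_eq_left ι <|
    LinearMap.range_le_ker_iff.1 (by rwa [Submodule.ker_mkQ])
  refine ⟨v, .of_comp (f := j) hι, fun N hN ↦ ?_⟩
  refine Submodule.map_injective_of_injective hj <|
    (hessential _ ?_).trans (Submodule.map_bot j).symm
  rw [LinearMap.range_comp, ← Submodule.map_inf j hj, hN, Submodule.map_bot]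

end Costandard

end QHData

/-! ### The duality -/

namespace Duality

variable {S : Type} [Ring S] {Λ : Type} [Fintype Λ] [PartialOrder Λ] {Q : QHData S Λ}
variable {A B C X Y : Type} [AddCommGroup A] [Module S A] [AddCommGroup B] [Module S B]
  [AddCommGroup C] [Module S C] [AddCommGroup X] [Module S X] [AddCommGroup Y] [Module S Y]

/-- The dual module `X°`, for an unbundled module `X`. -/
abbrev dual (d : Duality S Q) (X : Type) [AddCommGroup X] [Module S X] : Type :=
  d.D (ModuleCat.of S X)

/-- The dual map `f° : Y° → X°` of `f : X → Y`, for unbundled modules. -/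
def map (d : Duality S Q) (f : X →ₗ[S] Y) : d.dual Y →ₗ[S] d.dual X :=
  d.Dmap (A := ModuleCat.of S X) (B := ModuleCat.of S Y) f

variable (d : Duality S Q)

section Finite

variable [Module.Finite S A] [Module.Finite S B] [Module.Finite S C] [Module.Finite S X]
  [Module.Finite S Y]

instance : Module.Finite S (d.dual X) := d.finD (ModuleCat.of S X) ‹_›

theorem map_comp (f : A →ₗ[S] B) (g : B →ₗ[S] C) : d.map (g ∘ₗ f) = d.map f ∘ₗ d.map g :=
  d.Dcomp (A := ModuleCat.of S A) (B := ModuleCat.of S B) (C := ModuleCat.of S C)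
    ‹_› ‹_› ‹_› f g

theorem map_zero : d.map (0 : X →ₗ[S] Y) = 0 := by
  have h := d.Dadd (A := ModuleCat.of S X) (B := ModuleCat.of S Y) ‹_› ‹_› 0 0
  rw [add_zero] at h
  exact left_eq_add.1 h

theorem map_bijective : Function.Bijective (d.map : (X →ₗ[S] Y) → (d.dual Y →ₗ[S] d.dual X)) :=
  d.Dfull (A := ModuleCat.of S X) (B := ModuleCat.of S Y) ‹_› ‹_›

theorem nonempty_dual_dual_equiv (X : Type) [AddCommGroup X] [Module S X] [Module.Finite S X] :
    Nonempty (d.dual (d.dual X) ≃ₗ[S] X) :=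
  d.Dinvol (ModuleCat.of S X) ‹_›

theorem nonempty_dual_L_equiv (κ : Λ) : Nonempty (d.dual (Q.L κ) ≃ₗ[S] Q.L κ) := d.DL κ

theorem isShortExact_map {f : A →ₗ[S] B} {g : B →ₗ[S] C} (h : IsShortExact f g) :
    IsShortExact (d.map g) (d.map f) := by
  obtain ⟨hinj, hsurj, hexact⟩ := d.Dexact (A := ModuleCat.of S A) (B := ModuleCat.of S B)
    (C := ModuleCat.of S C) ‹_› ‹_› ‹_› f g h.injective h.surjective
    (LinearMap.exact_iff.1 h.exact).symm
  exact ⟨hinj, hsurj, LinearMap.exact_iff.2 hexact.symm⟩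

theorem map_surjective {f : X →ₗ[S] Y} (hf : Function.Injective f) :
    Function.Surjective (d.map f) :=
  (d.isShortExact_map (isShortExact_mkQ_range hf)).surjective

theorem map_injective [IsNoetherianRing S] {f : X →ₗ[S] Y} (hf : Function.Surjective f) :
    Function.Injective (d.map f) :=
  (d.isShortExact_map (isShortExact_ker_subtype hf)).injective

theorem surjective_of_map_injective {f : X →ₗ[S] Y} (hf : Function.Injective (d.map f)) :
    Function.Surjective f := by
  have hmkQ : (LinearMap.range f).mkQ ∘ₗ f = 0 := LinearMap.range_mkQ_comp f
  have hcomp : d.map f ∘ₗ d.map (LinearMap.range f).mkQ = d.map f ∘ₗ 0 := by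
    rw [← map_comp, hmkQ, map_zero, LinearMap.comp_zero]
  have hzero : (LinearMap.range f).mkQ = 0 :=
    d.map_bijective.1 (((LinearMap.cancel_left hf).1 hcomp).trans d.map_zero.symm)
  rw [← LinearMap.range_eq_top, ← Submodule.ker_mkQ (LinearMap.range f), hzero, LinearMap.ker_zero]

theorem essential_map [IsNoetherianRing S] {t : X →ₗ[S] Y} (ht : Function.Surjective t)
    (hsuperfluous : ∀ N : Submodule S X, N ⊔ LinearMap.ker t = ⊤ → N = ⊤)
    (N : Submodule S (d.dual X)) (hN : N ⊓ LinearMap.range (d.map t) = ⊥) : N = ⊥ := by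
  obtain ⟨e⟩ := d.nonempty_dual_dual_equiv (d.dual X ⧸ N)
  obtain ⟨h, hh⟩ := d.map_bijective.2 (e.symm.toLinearMap ∘ₗ N.mkQ)
  have hinj : Function.Injective (d.map (t ∘ₗ h)) := by
    rw [map_comp, hh, LinearMap.comp_assoc]
    refine e.symm.injective.comp ((injective_iff_map_eq_zero _).2 fun y hy ↦ ?_)
    have hmem : d.map t y ∈ N ⊓ LinearMap.range (d.map t) :=
      ⟨(Submodule.Quotient.mk_eq_zero N).1 hy, y, rfl⟩
    rw [hN, Submodule.mem_bot] at hmem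
    exact (injective_iff_map_eq_zero _).1 (d.map_injective ht) y hmem
  have hrange : LinearMap.range h = ⊤ := by
    apply hsuperfluous
    rw [← Submodule.comap_map_eq, ← LinearMap.range_comp,
      LinearMap.range_eq_top.2 (d.surjective_of_map_injective hinj), Submodule.comap_top]
  have hmkQ : Function.Injective N.mkQ := by
    have := d.map_injective (LinearMap.range_eq_top.1 hrange)
    rw [hh] at this
    exact .of_comp (f := e.symm) this
  rw [← N.ker_mkQ, LinearMap.ker_eq_bot.2 hmkQ]

theorem injective_dual_of_projective [IsNoetherianRing S] [Module.Projective S X] :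
    Module.Injective S (d.dual X) := by
  refine Module.Baer.injective fun I φ ↦ ?_
  obtain ⟨eI⟩ := d.nonempty_dual_dual_equiv I
  obtain ⟨eS⟩ := d.nonempty_dual_dual_equiv S
  obtain ⟨b, hb⟩ := d.map_bijective.2 (eS.symm.toLinearMap ∘ₗ I.subtype ∘ₗ eI.toLinearMap)
  have hb_surj : Function.Surjective b := by
    apply d.surjective_of_map_injective
    rw [hb]
    exact eS.symm.injective.comp (I.injective_subtype.comp eI.injective)
  obtain ⟨h, hh⟩ := d.map_bijective.2 (φ ∘ₗ eI.toLinearMap)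
  obtain ⟨h', hh'⟩ := Module.projective_lifting_property b h hb_surj
  refine ⟨d.map h' ∘ₗ eS.symm.toLinearMap, fun x hx ↦ ?_⟩
  have hcomp : d.map h' ∘ₗ d.map b = φ ∘ₗ eI.toLinearMap := by rw [← map_comp, hh', hh]
  rw [hb] at hcomp
  simpa using LinearMap.congr_fun hcomp (eI.symm ⟨x, hx⟩)

theorem exists_injective_embedding [IsNoetherianRing S] (d : Duality S Q) (X : Type)
    [AddCommGroup X] [Module S X] [Module.Finite S X] :
    ∃ J : ModuleCat.{0} S, Module.Finite S J ∧ Module.Injective S J ∧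
      ∃ f : X →ₗ[S] J, Function.Injective f := by
  obtain ⟨n, f, hf⟩ := Module.Finite.exists_fin' S (d.dual X)
  obtain ⟨e⟩ := d.nonempty_dual_dual_equiv X
  exact ⟨d.D (ModuleCat.of S (Fin n → S)), inferInstanceAs (Module.Finite S (d.dual (Fin n → S))),
    d.injective_dual_of_projective, d.map f ∘ₗ e.symm.toLinearMap,
    (d.map_injective hf).comp e.symm.injective⟩

theorem finite_costd [IsNoetherianRing S] (d : Duality S Q) (ν : Λ) :
    Module.Finite S (Q.costd ν) := by
  obtain ⟨ι, hι, hessential⟩ := Q.exists_essential_L_costd ν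
  obtain ⟨J, _, hJ, f, hf⟩ := d.exists_injective_embedding (Q.L ν)
  obtain ⟨h, hh⟩ := hJ.out ι hι f
  obtain rfl : h ∘ₗ ι = f := LinearMap.ext hh
  exact Module.Finite.of_injective h (injective_of_essential hessential hf)

end Finite

section Ext

variable [IsNoetherianRing S]

theorem extVanishes_dual {i : ℕ} [Module.Finite S A] [Module.Finite S B]
    (h : ExtVanishes S i A B) : ExtVanishes S i (d.dual B) (d.dual A) := by
  induction i using Nat.twoStepInduction generalizing A with
  | zero =>
    refine extVanishes_zero_iff.2 fun g ↦ ?_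
    obtain ⟨f, rfl⟩ := d.map_bijective.2 g
    rw [extVanishes_zero_iff.1 h f, map_zero]
  | one =>
    obtain ⟨n, f, hf⟩ := Module.Finite.exists_fin' S A
    have hexact := isShortExact_ker_subtype hf
    refine (d.isShortExact_map hexact).extVanishes_one_to_left
      (extVanishes_succ_of_injective 0 d.injective_dual_of_projective) fun u ↦ ?_
    obtain ⟨g, rfl⟩ := d.map_bijective.2 u
    obtain ⟨v, rfl⟩ := hexact.exists_extension h g
    exact ⟨d.map v, (d.map_comp _ _).symm⟩
  | more i _ ih =>
    obtain ⟨n, f, hf⟩ := Module.Finite.exists_fin' S A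
    have hexact := isShortExact_ker_subtype hf
    exact (d.isShortExact_map hexact).extVanishes_to_left
      (ih (hexact.extVanishes_from_left (extVanishes_succ_of_projective i) h))
      (extVanishes_succ_of_injective _ d.injective_dual_of_projective)

end Ext

end Duality

namespace QHData

variable {S : Type} [Ring S] {Λ : Type} [Fintype Λ] [PartialOrder Λ] {Q : QHData S Λ}
  {X : Type} [AddCommGroup X] [Module S X] {κ : Λ} (d : Duality S Q)

theorem IsFactor.dual [IsNoetherianRing S] [Module.Finite S X] (h : Q.IsFactor κ X) :
    Q.IsFactor κ (d.dual X) := by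
  obtain ⟨N, q, hq⟩ := isFactor_iff_exists_surjective.1 h
  obtain ⟨e⟩ := d.nonempty_dual_L_equiv κ
  exact ((isFactor_of_linearEquiv e).of_injective _ (d.map_injective hq)).of_surjective _
    (d.map_surjective N.injective_subtype)

theorem SupportedOn.dual [IsNoetherianRing S] [Module.Finite S X] {Γ : Set Λ}
    (h : Q.SupportedOn Γ X) : Q.SupportedOn Γ (d.dual X) :=
  have ⟨e⟩ := d.nonempty_dual_dual_equiv X
  fun κ hκ ↦ h κ ((hκ.dual d).congr e)

theorem eq_top_of_sup_ker_eq_top {p : Q.P κ →ₗ[S] X} (hp : Function.Surjective p)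
    {t : X →ₗ[S] Q.L κ} (ht : Function.Surjective t) {N : Submodule S X}
    (hN : N ⊔ LinearMap.ker t = ⊤) : N = ⊤ := by
  obtain ⟨π, hπ, hker⟩ := Q.exists_projective_cover κ
  by_contra hne
  have hcomap : N.comap p ≠ ⊤ := fun h ↦ hne <| by
    rw [← Submodule.map_comap_eq_of_surjective hp N, h, Submodule.map_top,
      LinearMap.range_eq_top.2 hp]
  have hcoatom := LinearMap.isCoatom_ker_of_surjective (f := t ∘ₗ p) (ht.comp hp)
  have hle : N.comap p ≤ LinearMap.ker (t ∘ₗ p) :=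
    (hker _ hcomap).trans_eq (hcoatom.le_iff_eq
      (LinearMap.isCoatom_ker_of_surjective hπ).1 |>.1 (hker _ hcoatom.1))
  have hNt : N ≤ LinearMap.ker t := (Submodule.comap_le_comap_iff_of_surjective hp).1 hle
  rw [sup_eq_right.2 hNt] at hN
  exact (LinearMap.isCoatom_ker_of_surjective ht).1 hN

end QHData

namespace Duality

variable {S : Type} [Ring S] [IsNoetherianRing S] {Λ : Type} [Fintype Λ] [PartialOrder Λ]
  {Q : QHData S Λ} {X : Type} [AddCommGroup X] [Module S X] [Module.Finite S X] {ν : Λ}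
  (d : Duality S Q)

theorem extVanishes_one_dual_std (hX : Q.SupportedOn (Set.Iic ν) X) :
    ExtVanishes S 1 X (d.dual (Q.std ν)) := by
  obtain ⟨e⟩ := d.nonempty_dual_dual_equiv X
  refine (d.extVanishes_dual (QHData.extVanishes_std_succ_of_supportedOn ?_ 0)).congr_left e.symm
  exact (hX.dual d).mono fun κ hκ h ↦ (Set.mem_Ioi.1 h).not_ge hκ

theorem surjective_of_essential_le_range {v : d.dual (Q.std ν) →ₗ[S] Q.costd ν}
    (hv : Function.Injective v) {N : Submodule S (Q.costd ν)}
    (hN : ∀ N' : Submodule S (Q.costd ν), N' ⊓ N = ⊥ → N' = ⊥) (hle : N ≤ LinearMap.range v) :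
    Function.Surjective v := by
  have := d.finite_costd ν
  have hexact := isShortExact_mkQ_range hv
  obtain ⟨s, hs⟩ := hexact.exists_lift (d.extVanishes_one_dual_std
    (QHData.supportedOn_costd.of_surjective _ hexact.surjective)) LinearMap.id
  have hrange : LinearMap.range s = ⊥ := by
    refine hN _ (eq_bot_iff.2 ?_)
    rintro _ ⟨⟨c, rfl⟩, hc⟩
    have : c = 0 := (LinearMap.congr_fun hs c).symm.trans
      ((Submodule.Quotient.mk_eq_zero _).2 (hle hc))
    rw [this, s.map_zero]
    exact Submodule.zero_mem _
  have hid : (LinearMap.id : (Q.costd ν ⧸ LinearMap.range v) →ₗ[S] _) = 0 := by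
    rw [← hs, LinearMap.range_eq_bot.1 hrange, LinearMap.comp_zero]
  rw [← LinearMap.range_eq_top, ← Submodule.ker_mkQ (LinearMap.range v),
    ← LinearMap.id_comp (LinearMap.range v).mkQ, hid, LinearMap.zero_comp, LinearMap.ker_zero]

theorem exists_dual_std_equiv_costd {t : Q.std ν →ₗ[S] Q.L ν} (ht : Function.Surjective t)
    (hker : Q.SupportedOn (Set.Iio ν) (LinearMap.ker t)) :
    ∃ (e : d.dual (Q.std ν) ≃ₗ[S] Q.costd ν) (e' : d.dual (Q.L ν) ≃ₗ[S] Q.L ν)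
      (ι : Q.L ν →ₗ[S] Q.costd ν), e.toLinearMap ∘ₗ d.map t = ι ∘ₗ e'.toLinearMap ∧
        ∀ N : Submodule S (Q.costd ν), N ⊓ LinearMap.range ι = ⊥ → N = ⊥ := by
  obtain ⟨⟨p, hp⟩, -⟩ := Q.exists_surjective_std_supportedOn ν
  obtain ⟨ι, hι, hessential⟩ := Q.exists_essential_L_costd ν
  obtain ⟨e'⟩ := d.nonempty_dual_L_equiv ν
  obtain ⟨v, hv⟩ := (d.isShortExact_map (isShortExact_ker_subtype ht)).exists_extension
    (QHData.extVanishes_one_costd ((hker.mono fun _ h ↦ (Set.mem_Iio.1 h).le).dual d))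
    (ι ∘ₗ e'.toLinearMap)
  have hv_inj : Function.Injective v := by
    refine injective_of_essential
      (d.essential_map ht fun _ ↦ QHData.eq_top_of_sup_ker_eq_top hp ht) ?_
    rw [hv]
    exact hι.comp e'.injective
  have hle : LinearMap.range ι ≤ LinearMap.range v := by
    rintro _ ⟨x, rfl⟩
    exact ⟨d.map t (e'.symm x), by simpa using LinearMap.congr_fun hv (e'.symm x)⟩
  exact ⟨.ofBijective v ⟨hv_inj, d.surjective_of_essential_le_range hv_inj hessential hle⟩,
    e', ι, hv, hessential⟩

theorem nonempty_dual_std_equiv_costd (ν : Λ) : Nonempty (d.dual (Q.std ν) ≃ₗ[S] Q.costd ν) :=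
  have ⟨_, ht, hker⟩ := Q.exists_surjective_std_L ν
  have ⟨e, _⟩ := d.exists_dual_std_equiv_costd ht hker
  ⟨e⟩

theorem exists_essential_L_costd_supportedOn (d : Duality S Q) (ν : Λ) :
    ∃ ι : Q.L ν →ₗ[S] Q.costd ν, Function.Injective ι ∧
      (∀ N : Submodule S (Q.costd ν), N ⊓ LinearMap.range ι = ⊥ → N = ⊥) ∧
      Q.SupportedOn (Set.Iio ν) (Q.costd ν ⧸ LinearMap.range ι) := by
  obtain ⟨t, ht, hker⟩ := Q.exists_surjective_std_L ν
  obtain ⟨e, e', ι, hι, hessential⟩ := d.exists_dual_std_equiv_costd ht hker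
  have hexact := d.isShortExact_map (isShortExact_ker_subtype ht)
  obtain rfl : e.toLinearMap ∘ₗ d.map t ∘ₗ e'.symm.toLinearMap = ι := by
    rw [← LinearMap.comp_assoc, hι, LinearMap.comp_assoc, e'.comp_symm, LinearMap.comp_id]
  have hinj : Function.Injective (e.toLinearMap ∘ₗ d.map t ∘ₗ e'.symm.toLinearMap) :=
    e.injective.comp (hexact.injective.comp e'.symm.injective)
  refine ⟨_, hinj, hessential, ?_⟩
  obtain ⟨s, hs⟩ := (isShortExact_mkQ_range hinj).exists_comp_eq_right
    (d.map (LinearMap.ker t).subtype ∘ₗ e.symm.toLinearMap) <| by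
      ext x
      simpa using LinearMap.congr_fun hexact.exact.linearMap_comp_eq_zero (e'.symm x)
  refine (hker.dual d).of_injective s ((injective_iff_map_eq_zero s).2 fun y hy ↦ ?_)
  obtain ⟨x, rfl⟩ := Submodule.mkQ_surjective _ y
  rw [← LinearMap.comp_apply, hs] at hy
  obtain ⟨z, hz⟩ := (hexact.exact _).1 hy
  exact (Submodule.Quotient.mk_eq_zero _).2 ⟨e' z, by simp [hz]⟩

theorem extVanishes_costd_iff {i : ℕ} :
    ExtVanishes S i X (Q.costd ν) ↔ ExtVanishes S i (Q.std ν) (d.dual X) := by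
  have := d.finite_costd ν
  obtain ⟨eX⟩ := d.nonempty_dual_dual_equiv X
  obtain ⟨eΔ⟩ := d.nonempty_dual_dual_equiv (Q.std ν)
  obtain ⟨e⟩ := d.nonempty_dual_std_equiv_costd ν
  refine ⟨fun h ↦ ?_, fun h ↦ ((d.extVanishes_dual h).congr_left eX.symm).congr_right e.symm⟩
  exact (d.extVanishes_dual (h.congr_right e)).congr_left eΔ.symm

end Duality

/-! ### Good filtrations -/

section Filtration

variable {S : Type} [Ring S] {X : Type} [AddCommGroup X] [Module S X]

theorem nonempty_subquot_comap_mkQ_equiv (N : Submodule S X) (A B : Submodule S (X ⧸ N)) :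
    Nonempty (subquot S (M := ModuleCat.of S X) (A.comap N.mkQ) (B.comap N.mkQ) ≃ₗ[S]
      subquot S (M := ModuleCat.of S (X ⧸ N)) A B) := by
  let q : B.comap N.mkQ →ₗ[S] B := N.mkQ.restrict fun _ hx ↦ hx
  have hq : Function.Surjective q := by
    rintro ⟨y, hy⟩
    obtain ⟨x, rfl⟩ := N.mkQ_surjective y
    exact ⟨⟨x, hy⟩, rfl⟩
  have hker : LinearMap.ker ((A.comap B.subtype).mkQ ∘ₗ q) =
      (A.comap N.mkQ).comap (B.comap N.mkQ).subtype := by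
    ext x
    simp [q]
  exact ⟨Submodule.quotEquivOfEq _ _ hker.symm ≪≫ₗ
    LinearMap.quotKerEquivOfSurjective _ ((Submodule.mkQ_surjective _).comp hq)⟩

theorem HasFiltrationWithSections.cons {N : Submodule S X} {n : ℕ}
    {f : Fin (n + 1) → Submodule S (X ⧸ N)} {D : Fin (n + 1) → ModuleCat.{0} S} (e : N ≃ₗ[S] D 0)
    (h : HasFiltrationWithSections S (ModuleCat.of S (X ⧸ N)) n f fun i ↦ D i.succ) :
    HasFiltrationWithSections S (ModuleCat.of S X) (n + 1)
      (Fin.cons ⊥ fun j ↦ (f j).comap N.mkQ) D := by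
  obtain ⟨hmono, hbot, htop, hsec⟩ := h
  have hN : (f 0).comap N.mkQ = N := by rw [hbot, Submodule.comap_bot, N.ker_mkQ]
  refine ⟨Fin.monotone_iff_le_succ.2 fun i ↦ ?_, rfl, ?_, fun i ↦ ?_⟩
  · cases i using Fin.cases with
    | zero => exact bot_le
    | succ i => exact Submodule.comap_mono (hmono i.castSucc_le_succ)
  · rw [← Fin.succ_last, Fin.cons_succ, htop, Submodule.comap_top]
  · cases i using Fin.cases with
    | zero =>
      refine ⟨Submodule.quotEquivOfEqBot _ ?_ ≪≫ₗ LinearEquiv.ofEq _ _ hN ≪≫ₗ e⟩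
      exact Submodule.comap_bot _ |>.trans (Submodule.ker_subtype _)
    | succ i =>
      obtain ⟨e₁⟩ := nonempty_subquot_comap_mkQ_equiv N (f i.castSucc) (f i.succ)
      obtain ⟨e₂⟩ := hsec i
      exact ⟨e₁ ≪≫ₗ e₂⟩

end Filtration

namespace QHData

variable {S : Type} [Ring S] [IsArtinianRing S] {Λ : Type} [Fintype Λ] [PartialOrder Λ]
  {Q : QHData S Λ} {X Y : Type} [AddCommGroup X] [Module S X] [AddCommGroup Y] [Module S Y]
  [Module.Finite S Y] {Γ : Set Λ}

theorem extVanishes_zero_of_supportedOn (h : ∀ κ ∈ Γ, ExtVanishes S 0 (Q.std κ) X)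
    (hY : Q.SupportedOn Γ Y) : ExtVanishes S 0 Y X := by
  refine extVanishes_of_factors_left (Q := Q) fun κ hκ ↦ extVanishes_zero_iff.2 fun f ↦ ?_
  obtain ⟨t, ht, -⟩ := Q.exists_surjective_std_L κ
  exact (LinearMap.cancel_right ht).1
    ((extVanishes_zero_iff.1 (h κ (hY κ hκ)) _).trans (LinearMap.zero_comp t).symm)

theorem extVanishes_one_of_supportedOn (hΓ : IsLowerSet Γ)
    (h₀ : ∀ κ ∈ Γ, ExtVanishes S 0 (Q.std κ) X) (h₁ : ∀ κ ∈ Γ, ExtVanishes S 1 (Q.std κ) X)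
    (hY : Q.SupportedOn Γ Y) : ExtVanishes S 1 Y X := by
  refine extVanishes_of_factors_left (Q := Q) fun κ hκ ↦ ?_
  obtain ⟨t, ht, hker⟩ := Q.exists_surjective_std_L κ
  exact (isShortExact_ker_subtype ht).extVanishes_from_right
    (extVanishes_zero_of_supportedOn h₀ (hker.mono fun ρ hρ ↦ hΓ (le_of_lt hρ) (hY κ hκ)))
    (h₁ κ (hY κ hκ))

theorem exists_not_extVanishes_zero_std (Q : QHData S Λ) [Module.Finite S X] [Nontrivial X] :
    ∃ ν, ¬ ExtVanishes S 0 (Q.std ν) X := by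
  obtain ⟨κ, f, hf⟩ := Q.exists_injective_from_L (X := X)
  obtain ⟨t, ht, -⟩ := Q.exists_surjective_std_L κ
  refine ⟨κ, fun h ↦ ne_zero_of_surjective ht ((LinearMap.cancel_left hf).1 ?_)⟩
  rw [extVanishes_zero_iff.1 h (f ∘ₗ t), LinearMap.comp_zero]

end QHData

namespace Duality

variable {S : Type} [Ring S] [IsArtinianRing S] {Λ : Type} [Fintype Λ] [PartialOrder Λ]
  {Q : QHData S Λ} {X : Type} [AddCommGroup X] [Module S X] [Module.Finite S X]

/- For `ν` minimal with `Hom(Δ ν, X) ≠ 0`, the socle of `∇ ν` embeds into `X`, and the embedding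
extends to `∇ ν` because `Ext¹(∇ ν / L ν, X) = 0`. -/
theorem exists_injective_from_costd [Nontrivial X] (d : Duality S Q)
    (hX : ∀ κ, ExtVanishes S 1 (Q.std κ) X) :
    ∃ ν, ¬ ExtVanishes S 0 (Q.std ν) X ∧ ∃ b : Q.costd ν →ₗ[S] X, Function.Injective b := by
  obtain ⟨ν, hν⟩ := (Set.toFinite {ν | ¬ ExtVanishes S 0 (Q.std ν) X}).exists_minimal
    Q.exists_not_extVanishes_zero_std
  refine ⟨ν, hν.prop, ?_⟩
  have hlt (κ : Λ) (hκ : κ ∈ Set.Iio ν) : ExtVanishes S 0 (Q.std κ) X :=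
    not_not.1 (hν.not_prop_of_lt hκ)
  obtain ⟨u, hu⟩ := not_forall.1 (mt extVanishes_zero_iff.2 hν.prop)
  obtain ⟨t, ht, hker⟩ := Q.exists_surjective_std_L ν
  obtain ⟨a, rfl⟩ := (isShortExact_ker_subtype ht).exists_comp_eq_right u
    (extVanishes_zero_iff.1 (QHData.extVanishes_zero_of_supportedOn hlt hker) _)
  obtain ⟨ι, hι, hessential, hquot⟩ := d.exists_essential_L_costd_supportedOn ν
  have := d.finite_costd ν
  obtain ⟨b, rfl⟩ := (isShortExact_mkQ_range hι).exists_extension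
    (QHData.extVanishes_one_of_supportedOn (isLowerSet_Iio ν) hlt (fun κ _ ↦ hX κ) hquot) a
  refine ⟨b, injective_of_essential hessential <|
    (LinearMap.injective_or_eq_zero _).resolve_right ?_⟩
  intro h0
  exact hu (by rw [h0, LinearMap.zero_comp])

theorem exists_costd_filtration (d : Duality S Q) (hX : ∀ κ, ExtVanishes S 1 (Q.std κ) X) :
    ∃ (n : ℕ) (f : Fin (n + 1) → Submodule S X) (g : Fin n → Λ),
      HasFiltrationWithSections S (ModuleCat.of S X) n f (fun i ↦ Q.costd (g i)) ∧
        ∀ i, ¬ ExtVanishes S 0 (Q.std (g i)) X := by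
  induction hlength : Module.length S X using WellFoundedLT.induction generalizing X with
  | ind _ ih =>
    subst hlength
    rcases subsingleton_or_nontrivial X with hsub | hnontriv
    · exact ⟨0, fun _ ↦ ⊥, Fin.elim0, ⟨monotone_const, rfl, Subsingleton.elim _ _, (·.elim0)⟩,
        (·.elim0)⟩
    obtain ⟨ν, hν, b, hb⟩ := d.exists_injective_from_costd hX
    have hexact := isShortExact_mkQ_range hb
    have hbot : LinearMap.range b ≠ ⊥ := by
      obtain ⟨ι, hι, -⟩ := Q.exists_essential_L_costd ν
      have := hι.nontrivial
      exact mt LinearMap.range_eq_bot.1 (ne_zero_of_injective hb)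
    obtain ⟨n, f, g, hfilt, hg⟩ := ih _ (Submodule.length_quotient_lt _ hbot) (fun κ ↦
      hexact.extVanishes_to_right (hX κ) (Q.extVanishes_std_succ_costd κ ν 1)) rfl
    let g' : Fin (n + 1) → Λ := Fin.cons ν g
    refine ⟨n + 1, _, g', hfilt.cons (D := fun i ↦ Q.costd (g' i))
      (LinearEquiv.ofInjective b hb).symm, Fin.cases hν fun i h ↦ hg i ?_⟩
    exact hexact.extVanishes_to_right h (Q.extVanishes_std_succ_costd _ ν 0)

theorem inCostdFilt (d : Duality S Q) (hX : ∀ κ, ExtVanishes S 1 (Q.std κ) X) :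
    InCostdFilt S Q (ModuleCat.of S X) :=
  have ⟨n, f, g, h, _⟩ := d.exists_costd_filtration hX
  ⟨n, f, g, h⟩

theorem extVanishes_of_forall_costd (d : Duality S Q) {M : Type} [AddCommGroup M] [Module S M]
    {i : ℕ} (hX : ∀ κ, ExtVanishes S 1 (Q.std κ) X)
    (h : ∀ κ, ¬ ExtVanishes S 0 (Q.std κ) X → ExtVanishes S i M (Q.costd κ)) :
    ExtVanishes S i M X := by
  obtain ⟨n, f, g, ⟨hmono, hbot, htop, hsec⟩, hg⟩ := d.exists_costd_filtration hX
  have hlast := extVanishes_filtration_right hmono hbot (Fin.last n) fun j _ ↦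
    (h _ (hg j)).congr_right (hsec j).some
  rw [htop] at hlast
  exact hlast.congr_right Submodule.topEquiv.symm

end Duality

/-! ### Resolutions -/

section ExactSeq

variable {S : Type} [Ring S] {n : ℕ} {N : Fin (n + 2) → ModuleCat.{0} S}
  {f : ∀ i : Fin (n + 1), N i.castSucc →ₗ[S] N i.succ}

theorem IsExactSeq.isShortExact (h : IsExactSeq S n N f) (j : Fin n) :
    IsShortExact (LinearMap.range (f j.castSucc)).subtype (f j.succ).rangeRestrict := by
  rw [h.2.2 j, ← LinearMap.ker_rangeRestrict]
  exact isShortExact_ker_subtype (f j.succ).surjective_rangeRestrict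

theorem IsExactSeq.exists_cons {K P : ModuleCat.{0} S} {u : K →ₗ[S] P} {p : P →ₗ[S] N 0}
    (h : IsExactSeq S n N f) (hup : IsShortExact u p) :
    ∃ f', IsExactSeq S (n + 1) (Fin.cons K (Fin.cons P fun i : Fin (n + 1) ↦ N i.succ)) f' := by
  obtain ⟨hinj, hsurj, hexact⟩ := h
  let N' : Fin (n + 3) → ModuleCat.{0} S := Fin.cons K (Fin.cons P fun i : Fin (n + 1) ↦ N i.succ)
  let f' : ∀ i : Fin (n + 2), N' i.castSucc →ₗ[S] N' i.succ :=
    Fin.cons u (Fin.cons (f 0 ∘ₗ p) fun i : Fin n ↦ f i.succ)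
  refine ⟨f', hup.injective, ?_, Fin.cases ?_ fun j ↦ ?_⟩
  · cases n with
    | zero => exact hsurj.comp hup.surjective
    | succ n => exact hsurj
  · change LinearMap.range u = LinearMap.ker (f 0 ∘ₗ p)
    exact (LinearMap.exact_iff.1 hup.exact).symm.trans
      (LinearMap.ker_comp_of_ker_eq_bot (g := f 0) p (LinearMap.ker_eq_bot.2 hinj)).symm
  · cases n with
    | zero => exact j.elim0
    | succ n =>
      refine Fin.cases ?_ (fun j ↦ ?_) j
      · change LinearMap.range (f 0 ∘ₗ p) = LinearMap.ker (f 1)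
        exact (LinearMap.range_comp_of_range_eq_top (f 0)
          (LinearMap.range_eq_top.2 hup.surjective)).trans (hexact 0)
      · exact hexact j.succ

end ExactSeq

section Projective

variable {S : Type} [Ring S] {n : ℕ}

theorem ProjdimLE.extVanishes {M : ModuleCat.{0} S} (h : ProjdimLE S M n) {i : ℕ} (hi : n < i)
    (Y : Type) [AddCommGroup Y] [Module S Y] : ExtVanishes S i M Y := by
  obtain ⟨N, f, hexact, rfl, hproj⟩ := h
  have hrange (j : Fin (n + 1)) (i : ℕ) (hi : (j : ℕ) < i) :
      ExtVanishes S i (LinearMap.range (f j)) Y := by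
    induction j using Fin.induction generalizing i with
    | zero =>
      obtain ⟨i, rfl⟩ := Nat.exists_eq_add_of_lt hi
      have := hproj 0
      exact (extVanishes_succ_of_projective _).congr_left (LinearEquiv.ofInjective _ hexact.1).symm
    | succ j ih =>
      obtain ⟨i, rfl⟩ := Nat.exists_eq_add_of_lt hi
      have : Module.Projective S (N j.castSucc.succ) := hproj j.succ
      refine (hexact.isShortExact j).extVanishes_from_right (ih _ ?_)
        (extVanishes_succ_of_projective _)
      simp only [Fin.val_castSucc, Fin.val_succ]
      lia
  have hlast := hrange (Fin.last n) i hi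
  rw [LinearMap.range_eq_top.2 hexact.2.1] at hlast
  exact hlast.congr_left Submodule.topEquiv.symm

variable {X : Type} [AddCommGroup X] [Module S X] [Module.Finite S X]

theorem projective_of_extVanishes_one [IsNoetherianRing S]
    (h : ∀ (Y : Type) [AddCommGroup Y] [Module S Y] [Module.Finite S Y], ExtVanishes S 1 X Y) :
    Module.Projective S X := by
  obtain ⟨m, f, hf⟩ := Module.Finite.exists_fin' S X
  obtain ⟨s, hs⟩ := (isShortExact_ker_subtype hf).exists_lift (h _) LinearMap.id
  exact Module.Projective.of_split s f hs

theorem exists_isExactSeq_projective [IsNoetherianRing S] (X : Type) [AddCommGroup X] [Module S X]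
    [Module.Finite S X] (n : ℕ) :
    ∃ (N : Fin (n + 2) → ModuleCat.{0} S) (f : ∀ i : Fin (n + 1), N i.castSucc →ₗ[S] N i.succ),
      IsExactSeq S n N f ∧ N (Fin.last (n + 1)) = ModuleCat.of S X ∧
      (∀ i : Fin n, Module.Projective S (N i.succ.castSucc)) ∧ Module.Finite S (N 0) ∧
      ∀ (Y : Type) [AddCommGroup Y] [Module S Y] (i : ℕ),
        ExtVanishes S (i + 1 + n) X Y → ExtVanishes S (i + 1) (N 0) Y := by
  induction n with
  | zero =>
    exact ⟨fun _ ↦ ModuleCat.of S X, fun _ ↦ LinearMap.id,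
      ⟨Function.injective_id, Function.surjective_id, (·.elim0)⟩, rfl, (·.elim0), ‹_›,
      fun _ _ _ _ h ↦ h⟩
  | succ n ih =>
    obtain ⟨N, f, hexact, hlast, hproj, _, hext⟩ := ih
    obtain ⟨m, p, hp⟩ := Module.Finite.exists_fin' S (N 0)
    have hker := isShortExact_ker_subtype hp
    obtain ⟨f', hf'⟩ := hexact.exists_cons (K := ModuleCat.of S (LinearMap.ker p))
      (P := ModuleCat.of S (Fin m → S)) hker
    refine ⟨_, f', hf', hlast, Fin.cases ?projective hproj, ?finite, ?ext⟩
    case projective => exact inferInstanceAs (Module.Projective S (Fin m → S))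
    case finite => exact inferInstanceAs (Module.Finite S (LinearMap.ker p))
    case ext =>
      intro Y _ _ i h
      exact hker.extVanishes_from_left (extVanishes_succ_of_projective i)
        (hext Y (i + 1) (by rwa [add_right_comm _ 1 n]))

theorem projdimLE_of_extVanishes [IsNoetherianRing S]
    (h : ∀ (Y : Type) [AddCommGroup Y] [Module S Y] [Module.Finite S Y],
      ExtVanishes S (n + 1) X Y) :
    ProjdimLE S (ModuleCat.of S X) n := by
  obtain ⟨N, f, hexact, hlast, hproj, hfinite, hext⟩ :=
    exists_isExactSeq_projective (S := S) X n
  have hzero : Module.Projective S (N 0) := projective_of_extVanishes_one fun Y _ _ _ ↦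
    hext Y 0 (by rw [zero_add, add_comm 1 n]; exact h Y)
  exact ⟨N, f, hexact, hlast, Fin.cases hzero hproj⟩

end Projective

/-! ### Good filtration dimension and the upper bound -/

section GoodDim

variable {S : Type} [Ring S] {Λ : Type} [Fintype Λ] [PartialOrder Λ] {Q : QHData S Λ}

/-- The cohomological form of `gfd X ≤ n`, free of coresolutions: `Ext^i(Δ ν, X) = 0` for all `ν`
and all `i > n`. -/
def GoodDimLE (Q : QHData S Λ) (n : ℕ) (X : Type) [AddCommGroup X] [Module S X] : Prop :=
  ∀ ν i, n < i → ExtVanishes S i (Q.std ν) X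

theorem InCostdFilt.extVanishes_std_succ {M : ModuleCat.{0} S} (h : InCostdFilt S Q M) (ν : Λ)
    (i : ℕ) : ExtVanishes S (i + 1) (Q.std ν) M := by
  obtain ⟨n, f, g, hmono, hbot, htop, hsec⟩ := h
  have hlast := extVanishes_filtration_right hmono hbot (Fin.last n) fun j _ ↦
    (Q.extVanishes_std_succ_costd ν (g j) i).congr_right (hsec j).some
  rw [htop] at hlast
  exact hlast.congr_right Submodule.topEquiv.symm

theorem GfdLE.goodDimLE {M : ModuleCat.{0} S} {n : ℕ} (h : GfdLE S Q M n) : GoodDimLE Q n M := by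
  obtain ⟨N, f, hexact, rfl, hfilt⟩ := h
  intro ν
  have hrange (j : Fin (n + 1)) (i : ℕ) (hi : n - j < i) :
      ExtVanishes S i (Q.std ν) (LinearMap.range (f j)) := by
    induction j using Fin.reverseInduction generalizing i with
    | last =>
      obtain ⟨i, rfl⟩ := Nat.exists_eq_add_of_lt hi
      rw [LinearMap.range_eq_top.2 hexact.2.1]
      exact ((hfilt (Fin.last n)).extVanishes_std_succ ν _).congr_right Submodule.topEquiv
    | cast j ih =>
      obtain ⟨i, rfl⟩ := Nat.exists_eq_add_of_lt hi
      refine (hexact.isShortExact j).extVanishes_to_left (ih _ ?_)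
        ((hfilt j.castSucc).extVanishes_std_succ ν _)
      simp only [Fin.val_castSucc, Fin.val_succ]
      lia
  exact fun i hi ↦ (hrange 0 i hi).congr_right (LinearEquiv.ofInjective (f 0) hexact.1)

theorem GfdLE.succ_of_isShortExact {M J K : ModuleCat.{0} S} {f : M →ₗ[S] J} {g : J →ₗ[S] K}
    {n : ℕ} (hfg : IsShortExact f g) (hJ : InCostdFilt S Q J) (hK : GfdLE S Q K n) :
    GfdLE S Q M (n + 1) := by
  obtain ⟨N, c, hexact, rfl, hfilt⟩ := hK
  obtain ⟨c', hc'⟩ := hexact.exists_cons hfg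
  exact ⟨_, c', hc', rfl, Fin.cases hJ hfilt⟩

end GoodDim

namespace Duality

variable {S : Type} [Ring S] [IsArtinianRing S] {Λ : Type} [Fintype Λ] [PartialOrder Λ]
  {Q : QHData S Λ} {X : Type} [AddCommGroup X] [Module S X] [Module.Finite S X]

theorem gfdLE (d : Duality S Q) {n : ℕ} (h : GoodDimLE Q n X) :
    GfdLE S Q (ModuleCat.of S X) n := by
  induction n generalizing X with
  | zero =>
    exact ⟨fun _ ↦ ModuleCat.of S X, fun _ ↦ LinearMap.id,
      ⟨Function.injective_id, Function.surjective_id, (·.elim0)⟩, rfl,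
      fun _ ↦ d.inCostdFilt fun κ ↦ h κ 1 zero_lt_one⟩
  | succ n ih =>
    obtain ⟨J, hJfinite, hJ, f, hf⟩ := d.exists_injective_embedding X
    have hexact := isShortExact_mkQ_range hf
    refine GfdLE.succ_of_isShortExact (K := ModuleCat.of S (J ⧸ LinearMap.range f)) hexact
      (d.inCostdFilt fun κ ↦ extVanishes_succ_of_injective 0 hJ) (ih fun ν i hi ↦ ?_)
    obtain ⟨i, rfl⟩ := Nat.exists_eq_add_of_lt hi
    exact hexact.extVanishes_to_right (extVanishes_succ_of_injective _ hJ) (h ν _ (by lia))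

theorem gfd_le_of_goodDimLE (d : Duality S Q) {n : ℕ} (h : GoodDimLE Q n X) :
    gfd S Q (ModuleCat.of S X) ≤ n :=
  Nat.sInf_le (d.gfdLE h)

theorem goodDimLE_gfd (d : Duality S Q) : GoodDimLE Q (gfd S Q (ModuleCat.of S X)) X :=
  (Nat.sInf_mem (s := {n | GfdLE S Q (ModuleCat.of S X) n})
    ⟨_, d.gfdLE fun _ _ ↦ QHData.extVanishes_std_of_card_lt⟩).goodDimLE

theorem gfd_le_gfdAlg (d : Duality S Q) : gfd S Q (ModuleCat.of S X) ≤ gfdAlg S Q := by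
  refine le_csSup ⟨Nat.card Λ, ?_⟩ ⟨ModuleCat.of S X, ‹_›, rfl⟩
  rintro _ ⟨M, hM, rfl⟩
  exact d.gfd_le_of_goodDimLE (X := M) fun _ _ ↦ QHData.extVanishes_std_of_card_lt

theorem goodDimLE_gfdAlg (d : Duality S Q) : GoodDimLE Q (gfdAlg S Q) X :=
  fun ν i hi ↦ d.goodDimLE_gfd ν i (d.gfd_le_gfdAlg.trans_lt hi)

theorem extVanishes_of_gfdAlg_add_lt (d : Duality S Q) {Y : Type} [AddCommGroup Y] [Module S Y]
    [Module.Finite S Y] {i j : ℕ} (hY : GoodDimLE Q j Y) (hi : gfdAlg S Q + j < i) :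
    ExtVanishes S i X Y := by
  induction j generalizing i Y with
  | zero =>
    exact d.extVanishes_of_forall_costd (fun κ ↦ hY κ 1 zero_lt_one) fun κ _ ↦
      d.extVanishes_costd_iff.2 (d.goodDimLE_gfdAlg κ i hi)
  | succ j ih =>
    obtain ⟨J, hJfinite, hJ, f, hf⟩ := d.exists_injective_embedding Y
    have hexact := isShortExact_mkQ_range hf
    obtain ⟨i, rfl⟩ := Nat.exists_eq_add_of_lt hi
    refine hexact.extVanishes_to_left (ih (fun ν m hm ↦ ?_) (by lia))
      (extVanishes_succ_of_injective _ hJ)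
    obtain ⟨m, rfl⟩ := Nat.exists_eq_add_of_lt hm
    exact hexact.extVanishes_to_right (extVanishes_succ_of_injective _ hJ) (hY ν _ (by lia))

theorem projdimLE_two_mul_gfdAlg (d : Duality S Q) :
    ProjdimLE S (ModuleCat.of S X) (2 * gfdAlg S Q) :=
  projdimLE_of_extVanishes fun _ _ _ _ ↦ d.extVanishes_of_gfdAlg_add_lt d.goodDimLE_gfdAlg (by lia)

theorem projdim_le_globdim (d : Duality S Q) : projdim S (ModuleCat.of S X) ≤ globdim S := by
  refine le_csSup ⟨2 * gfdAlg S Q, ?_⟩ ⟨ModuleCat.of S X, ‹_›, rfl⟩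
  rintro _ ⟨M, hM, rfl⟩
  exact Nat.sInf_le (d.projdimLE_two_mul_gfdAlg (X := M))

theorem globdim_le_two_mul_gfdAlg (d : Duality S Q) : globdim S ≤ 2 * gfdAlg S Q := by
  refine csSup_le ⟨_, ModuleCat.of S PUnit, inferInstanceAs (Module.Finite S PUnit), rfl⟩ ?_
  rintro _ ⟨M, hM, rfl⟩
  exact Nat.sInf_le (d.projdimLE_two_mul_gfdAlg (X := M))

theorem le_globdim_of_not_extVanishes (d : Duality S Q) {Y : Type} [AddCommGroup Y] [Module S Y]
    {i : ℕ} (h : ¬ ExtVanishes S i X Y) : i ≤ globdim S := by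
  have hX : ProjdimLE S (ModuleCat.of S X) (projdim S (ModuleCat.of S X)) :=
    Nat.sInf_mem (s := {n | ProjdimLE S (ModuleCat.of S X) n}) ⟨_, d.projdimLE_two_mul_gfdAlg⟩
  exact not_lt.1 fun hi ↦ h (hX.extVanishes (d.projdim_le_globdim.trans_lt hi) Y)

theorem exists_not_goodDimLE_pred_gfdAlg (d : Duality S Q) (hn : 0 < gfdAlg S Q) :
    ∃ l, ¬ GoodDimLE Q (gfdAlg S Q - 1) (Q.L l) := by
  by_contra! hL
  have hle : gfdAlg S Q ≤ gfdAlg S Q - 1 := by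
    refine csSup_le ⟨_, ModuleCat.of S PUnit, inferInstanceAs (Module.Finite S PUnit), rfl⟩ ?_
    rintro _ ⟨M, hM, rfl⟩
    exact d.gfd_le_of_goodDimLE (X := M) fun ν i hi ↦
      QHData.extVanishes_of_factors_right fun κ _ ↦ hL κ ν i hi
  lia

theorem exists_not_extVanishes_gfdAlg (d : Duality S Q) (hn : 0 < gfdAlg S Q) :
    ∃ l μ, ¬ ExtVanishes S (gfdAlg S Q) (Q.std μ) (Q.L l) := by
  by_contra! h
  obtain ⟨l, hl⟩ := d.exists_not_goodDimLE_pred_gfdAlg hn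
  refine hl fun μ i hi ↦ ?_
  rcases (Nat.le_of_pred_lt hi).eq_or_lt with rfl | hlt
  · exact h l μ
  · exact d.goodDimLE_gfdAlg μ i hlt

end Duality

/-! ### Minimal weights -/

namespace QHData

variable {S : Type} [Ring S] {Λ : Type} [Fintype Λ] [PartialOrder Λ] {Q : QHData S Λ} {κ μ : Λ}
  {M X Y : Type} [AddCommGroup M] [Module S M] [AddCommGroup X] [Module S X] [AddCommGroup Y]
  [Module S Y]

theorem extVanishes_std_succ_of_supportedOn_isMin (hX : Q.SupportedOn {κ | IsMin κ} X)
    [Module.Finite S X] (ν : Λ) (i : ℕ) : ExtVanishes S (i + 1) (Q.std ν) X :=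
  extVanishes_std_succ_of_supportedOn (hX.mono fun _ hκ ↦ hκ.not_lt) i

variable [IsArtinianRing S]

theorem SupportedOn.subsingleton [Module.Finite S X] (h : Q.SupportedOn ∅ X) : Subsingleton X := by
  by_contra hX
  rw [not_subsingleton_iff_nontrivial] at hX
  obtain ⟨κ, f, hf⟩ := Q.exists_injective_from_L (X := X)
  exact h κ ((isFactor_L_iff.2 rfl).of_injective f hf)

theorem nonempty_std_equiv_L_of_isMin (Q : QHData S Λ) (hκ : IsMin κ) :
    Nonempty (Q.std κ ≃ₗ[S] Q.L κ) := by
  obtain ⟨t, ht, hker⟩ := Q.exists_surjective_std_L κ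
  rw [hκ.Iio_eq] at hker
  have := hker.subsingleton
  exact ⟨.ofBijective t ⟨LinearMap.ker_eq_bot.1 Submodule.eq_bot_of_subsingleton, ht⟩⟩

theorem extVanishes_succ_of_supportedOn_isMin [Module.Finite S X] [Module.Finite S Y]
    (hX : Q.SupportedOn {κ | IsMin κ} X) (hY : Q.SupportedOn {κ | IsMin κ} Y) (i : ℕ) :
    ExtVanishes S (i + 1) X Y :=
  extVanishes_of_factors_left fun κ hκ ↦
    (extVanishes_std_succ_of_supportedOn_isMin hY κ i).congr_left
      (Q.nonempty_std_equiv_L_of_isMin (hX κ hκ)).some.symm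

theorem extVanishes_zero_L_of_supportedOn_isMin [Module.Finite S X] {n : ℕ} (hμ : IsMin μ)
    (hX : Q.SupportedOn {κ | IsMin κ} X) (hMX : ExtVanishes S n M X)
    (hMμ : ¬ ExtVanishes S n M (Q.L μ)) : ExtVanishes S 0 (Q.L μ) X := by
  refine extVanishes_zero_iff.2 fun u ↦ (u.injective_or_eq_zero).resolve_left fun hu ↦ hMμ ?_
  have hquot := hX.of_surjective _ (Submodule.mkQ_surjective (LinearMap.range u))
  obtain ⟨v, hv⟩ := (isShortExact_mkQ_range hu).exists_extension
    (extVanishes_succ_of_supportedOn_isMin hquot (supportedOn_L_iff.2 hμ) 0) LinearMap.id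
  exact hMX.retract_right v u hv

end QHData

namespace Duality

variable {S : Type} [Ring S] [IsArtinianRing S] {Λ : Type} [Fintype Λ] [PartialOrder Λ]
  {Q : QHData S Λ} {κ μ : Λ} {M X : Type} [AddCommGroup M] [Module S M] [AddCommGroup X]
  [Module S X] [Module.Finite S X]

theorem nonempty_costd_equiv_L_of_isMin (d : Duality S Q) (hκ : IsMin κ) :
    Nonempty (Q.costd κ ≃ₗ[S] Q.L κ) := by
  obtain ⟨ι, hι, -, hquot⟩ := d.exists_essential_L_costd_supportedOn κ
  have := d.finite_costd κ
  rw [hκ.Iio_eq] at hquot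
  have := hquot.subsingleton
  exact ⟨(LinearEquiv.ofBijective ι ⟨hι, LinearMap.range_eq_top.1
    (Submodule.Quotient.subsingleton_iff.1 this)⟩).symm⟩

theorem extVanishes_of_supportedOn_isMin (d : Duality S Q) {i : ℕ}
    (hM : ∀ κ, IsMin κ → ExtVanishes S i M (Q.costd κ)) (hX : Q.SupportedOn {κ | IsMin κ} X) :
    ExtVanishes S i M X :=
  QHData.extVanishes_of_factors_right fun κ hκ ↦
    (hM κ (hX κ hκ)).congr_right (d.nonempty_costd_equiv_L_of_isMin (hX κ hκ)).some.symm

/- `J` is the quotient of an injective module containing `X` by its largest submodule supported on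
minimal weights. -/
theorem exists_embedding_extVanishes (d : Duality S Q)
    (hX : ∀ κ, IsMin κ → ExtVanishes S 0 (Q.L κ) X) :
    ∃ J : ModuleCat.{0} S, Module.Finite S J ∧ (∃ f : X →ₗ[S] J, Function.Injective f) ∧
      (∀ ν, ExtVanishes S 1 (Q.std ν) J) ∧
      ∀ (A : Type) [AddCommGroup A] [Module S A], Q.SupportedOn {κ | IsMin κ} A →
        ExtVanishes S 0 A J := by
  obtain ⟨I, hIfinite, hI, ι, hι⟩ := d.exists_injective_embedding X
  obtain ⟨R, hR⟩ := QHData.exists_isGreatest_supportedOn Q {κ | IsMin κ} I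
  refine ⟨ModuleCat.of S (I ⧸ R), inferInstanceAs (Module.Finite S (I ⧸ R)), ⟨R.mkQ ∘ₗ ι, ?_⟩,
    fun ν ↦ (isShortExact_subtype_mkQ R).extVanishes_to_right
      (extVanishes_succ_of_injective 0 hI)
      (QHData.extVanishes_std_succ_of_supportedOn_isMin hR.1 ν 1),
    fun A _ _ ↦ QHData.extVanishes_zero_quotient_of_isGreatest hR⟩
  have hker : Q.SupportedOn {κ | IsMin κ} (LinearMap.ker (R.mkQ ∘ₗ ι)) := by
    refine hR.1.of_injective (ι.restrict fun x hx ↦ (Submodule.Quotient.mk_eq_zero R).1 hx)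
      fun x y hxy ↦ Subtype.ext (hι (congrArg Subtype.val hxy))
  have hzero := extVanishes_zero_iff.1
    (QHData.extVanishes_of_factors_left fun κ hκ ↦ hX κ (hker κ hκ)) (LinearMap.ker _).subtype
  rw [← LinearMap.ker_eq_bot, ← Submodule.range_subtype (LinearMap.ker _), hzero,
    LinearMap.range_zero]

theorem extVanishes_one_L_of_extVanishes_zero (d : Duality S Q) {n : ℕ}
    (hM : ∀ ν, ¬ IsMin ν → ExtVanishes S n M (Q.costd ν)) (hμ : IsMin μ)
    (hMμ : ¬ ExtVanishes S n M (Q.L μ)) (hX₀ : ∀ κ, IsMin κ → ExtVanishes S 0 (Q.L κ) X)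
    (hX₁ : ∀ ν, ¬ IsMin ν → ExtVanishes S 1 (Q.std ν) X) (hMX : ExtVanishes S (n + 1) M X) :
    ExtVanishes S 1 (Q.L μ) X := by
  obtain ⟨J, hJfinite, ⟨f, hf⟩, hJ₁, hJ₀⟩ := d.exists_embedding_extVanishes hX₀
  have hstd {κ : Λ} (hκ : IsMin κ) : Q.SupportedOn {κ | IsMin κ} (Q.std κ) :=
    (QHData.supportedOn_L_iff.2 hκ).of_injective _
      (Q.nonempty_std_equiv_L_of_isMin hκ).some.injective
  obtain ⟨R, hR⟩ := QHData.exists_isGreatest_supportedOn Q {κ | IsMin κ} (J ⧸ LinearMap.range f)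
  have hXG := (isShortExact_mkQ_range hf).codRestrict_comap R
  have hGJ := (isShortExact_mkQ_range hf).subtype_comap R
  have hG₁ (ν : Λ) : ExtVanishes S 1 (Q.std ν) (R.comap (LinearMap.range f).mkQ) := by
    by_cases hν : IsMin ν
    · exact hGJ.extVanishes_to_left
        (QHData.extVanishes_zero_quotient_of_isGreatest hR (hstd hν)) (hJ₁ ν)
    · exact hXG.extVanishes_to_middle (hX₁ ν hν)
        (QHData.extVanishes_std_succ_of_supportedOn_isMin hR.1 ν 0)
  have hG₀ {κ : Λ} (hκ : IsMin κ) :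
      ExtVanishes S 0 (Q.std κ) (R.comap (LinearMap.range f).mkQ) :=
    extVanishes_zero_iff.2 fun u ↦ (LinearMap.cancel_left hGJ.injective).1
      ((extVanishes_zero_iff.1 (hJ₀ _ (hstd hκ)) _).trans (LinearMap.comp_zero _).symm)
  have hMG : ExtVanishes S n M (R.comap (LinearMap.range f).mkQ) :=
    d.extVanishes_of_forall_costd hG₁ fun κ hκ ↦ hM κ fun hmin ↦ hκ (hG₀ hmin)
  have hμR : ExtVanishes S 0 (Q.L μ) R := QHData.extVanishes_zero_L_of_supportedOn_isMin hμ hR.1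
    (hXG.extVanishes_to_right hMG hMX) hMμ
  exact hXG.extVanishes_to_left hμR
    ((hG₁ μ).congr_left (Q.nonempty_std_equiv_L_of_isMin hμ).some.symm)

theorem extVanishes_one_L (d : Duality S Q) {n : ℕ}
    (hM : ∀ ν, ¬ IsMin ν → ExtVanishes S n M (Q.costd ν))
    (hMmin : ∀ κ, IsMin κ → ExtVanishes S (n + 2) M (Q.costd κ)) (hμ : IsMin μ)
    (hMμ : ¬ ExtVanishes S n M (Q.L μ)) (hX : ∀ ν, ¬ IsMin ν → ExtVanishes S 1 (Q.std ν) X)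
    (hMX : ExtVanishes S (n + 1) M X) : ExtVanishes S 1 (Q.L μ) X := by
  obtain ⟨R, hR⟩ := QHData.exists_isGreatest_supportedOn Q {κ | IsMin κ} X
  have hexact := isShortExact_subtype_mkQ R
  refine hexact.extVanishes_to_middle
    (QHData.extVanishes_succ_of_supportedOn_isMin (QHData.supportedOn_L_iff.2 hμ) hR.1 0)
    (d.extVanishes_one_L_of_extVanishes_zero hM hμ hMμ (fun κ hκ ↦ ?_) (fun ν hν ↦ ?_) ?_)
  · exact QHData.extVanishes_zero_quotient_of_isGreatest hR (QHData.supportedOn_L_iff.2 hκ)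
  · exact hexact.extVanishes_to_right (hX ν hν)
      (QHData.extVanishes_std_succ_of_supportedOn_isMin hR.1 ν 1)
  · exact hexact.extVanishes_to_right hMX (d.extVanishes_of_supportedOn_isMin hMmin hR.1)

end Duality

/-! ### Strong property A and the lower bound -/

namespace Duality

variable {S : Type} [Ring S] [IsArtinianRing S] {Λ : Type} [Fintype Λ] [PartialOrder Λ]
  {Q : QHData S Λ} {κ l ν : Λ} {i : ℕ}

theorem add_gfd_le_gfd_of_not_extVanishes_std (d : Duality S Q) (hA : StrongPropA S Q)
    (h : ¬ ExtVanishes S i (Q.std ν) (Q.L l)) : i + gfd S Q (Q.L ν) ≤ gfd S Q (Q.L l) := by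
  induction i generalizing l with
  | zero =>
    obtain rfl : ν = l := QHData.isFactor_L_iff.1 (not_not.1 (mt QHData.extVanishes_zero_std h))
    rw [zero_add]
  | succ i ih =>
    obtain ⟨ι, hι, -, hquot⟩ := d.exists_essential_L_costd_supportedOn l
    have := d.finite_costd l
    obtain ⟨κ, hκ, hνκ⟩ : ∃ κ < l, ¬ ExtVanishes S i (Q.std ν) (Q.L κ) := by
      by_contra! hvan
      exact h ((isShortExact_mkQ_range hι).extVanishes_to_left
        (QHData.extVanishes_of_factors_right fun κ hκ ↦ hvan κ (hquot κ hκ))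
        (Q.extVanishes_std_succ_costd ν l i))
    have := ih hνκ
    have := hA κ l hκ
    lia

theorem extVanishes_L_costd (d : Duality S Q) (h : ExtVanishes S i (Q.std ν) (Q.L l)) :
    ExtVanishes S i (Q.L l) (Q.costd ν) :=
  d.extVanishes_costd_iff.2 (h.congr_right (d.nonempty_dual_L_equiv l).some)

theorem extVanishes_L_symm (d : Duality S Q) (h : ExtVanishes S i (Q.L κ) (Q.L l)) :
    ExtVanishes S i (Q.L l) (Q.L κ) :=
  ((d.extVanishes_dual h).congr_left (d.nonempty_dual_L_equiv l).some.symm).congr_right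
    (d.nonempty_dual_L_equiv κ).some.symm

theorem isMin_of_not_extVanishes_gfdAlg_std (d : Duality S Q) (hA : StrongPropA S Q)
    (h : ¬ ExtVanishes S (gfdAlg S Q) (Q.std ν) (Q.L l)) : IsMin ν := by
  rw [isMin_iff_forall_not_lt]
  intro κ hκ
  have hκν := hA κ ν hκ
  have hνl := d.add_gfd_le_gfd_of_not_extVanishes_std hA h
  have hl : gfd S Q (Q.L l) ≤ gfdAlg S Q := d.gfd_le_gfdAlg
  lia

theorem exists_dimension_shift (d : Duality S Q) (m : ℕ) (X : Type) [AddCommGroup X] [Module S X]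
    [Module.Finite S X] :
    ∃ V : ModuleCat.{0} S, Module.Finite S V ∧ ∀ (i : ℕ) (A : Type) [AddCommGroup A] [Module S A],
      ExtVanishes S (i + 1) A V ↔ ExtVanishes S (i + m + 1) A X := by
  induction m with
  | zero => exact ⟨ModuleCat.of S X, ‹_›, fun _ _ _ _ ↦ Iff.rfl⟩
  | succ m ih =>
    obtain ⟨V, hVfinite, hV⟩ := ih
    obtain ⟨J, hJfinite, hJ, f, hf⟩ := d.exists_injective_embedding V
    have hexact := isShortExact_mkQ_range hf
    refine ⟨ModuleCat.of S (J ⧸ LinearMap.range f),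
      inferInstanceAs (Module.Finite S (J ⧸ LinearMap.range f)), fun i A _ _ ↦ ?_⟩
    rw [← add_assoc, add_right_comm i m 1, ← hV]
    exact ⟨fun h ↦ hexact.extVanishes_to_left h (extVanishes_succ_of_injective _ hJ),
      hexact.extVanishes_to_right (extVanishes_succ_of_injective _ hJ)⟩

theorem exists_not_extVanishes_two_mul_gfdAlg (d : Duality S Q) (hA : StrongPropA S Q)
    (hn : 0 < gfdAlg S Q) : ∃ l, ¬ ExtVanishes S (2 * gfdAlg S Q) (Q.L l) (Q.L l) := by
  obtain ⟨l, μ, hμl⟩ := d.exists_not_extVanishes_gfdAlg hn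
  refine ⟨l, fun hll ↦ hμl ?_⟩
  have hμ : IsMin μ := d.isMin_of_not_extVanishes_gfdAlg_std hA hμl
  obtain ⟨stdEquiv⟩ := Q.nonempty_std_equiv_L_of_isMin hμ
  obtain ⟨m, hm⟩ := Nat.exists_eq_add_of_le' hn
  obtain ⟨V, hVfinite, hV⟩ := d.exists_dimension_shift m (Q.L l)
  have hshift (A : Type) [AddCommGroup A] [Module S A] :
      ExtVanishes S 1 A V ↔ ExtVanishes S (gfdAlg S Q) A (Q.L l) := by
    rw [hm, ← zero_add m]
    exact hV 0 A
  have hstd (ν : Λ) (hν : ¬ IsMin ν) : ExtVanishes S (gfdAlg S Q) (Q.std ν) (Q.L l) :=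
    not_not.1 (mt (d.isMin_of_not_extVanishes_gfdAlg_std hA) hν)
  have hlV : ExtVanishes S (gfdAlg S Q + 1) (Q.L l) V := by
    rw [hV, show gfdAlg S Q + m + 1 = 2 * gfdAlg S Q by lia]
    exact hll
  have hμV : ExtVanishes S 1 (Q.L μ) V :=
    d.extVanishes_one_L (fun ν hν ↦ d.extVanishes_L_costd (hstd ν hν))
      (fun κ _ ↦ d.extVanishes_L_costd (d.goodDimLE_gfdAlg κ _ (by lia))) hμ
      (fun hlμ ↦ hμl ((d.extVanishes_L_symm hlμ).congr_left stdEquiv))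
      (fun ν hν ↦ (hshift _).2 (hstd ν hν)) hlV
  exact ((hshift _).1 hμV).congr_left stdEquiv

end Duality

end QHPaper

open QHPaper in
theorem stmt1_general (S Λ : Type) [Ring S] [IsArtinianRing S] [Fintype Λ] [PartialOrder Λ]
    (QH : QHData S Λ) (dual : Duality S QH) (hA : StrongPropA S QH) (n : ℕ)
    (hgfd : gfdAlg S QH = n) : globdim S = 2 * n := by
  subst hgfd
  refine dual.globdim_le_two_mul_gfdAlg.antisymm ?_
  rcases (gfdAlg S QH).eq_zero_or_pos with hzero | hpos
  · simp [hzero]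
  · obtain ⟨l, hl⟩ := dual.exists_not_extVanishes_two_mul_gfdAlg hA hpos
    exact dual.le_globdim_of_not_extVanishes hl

open QHPaper in
/-- Let `S` be a quasi-hereditary algebra with a simple-preserving duality
satisfying strong property A and with `gfd(S) = n`. Then the global dimension of `S`
equals `2n`. -/
theorem stmt1 (k S Λ : Type) [Field k] [Ring S] [Algebra k S] [FiniteDimensional k S]
    [Fintype Λ] [PartialOrder Λ]
    (QH : QHData S Λ) (dual : Duality S QH)
    (hA : StrongPropA S QH) (n : ℕ) (hgfd : gfdAlg S QH = n) :
    globdim S = 2 * n := by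
  have : IsArtinianRing S := .of_finite k S
  exact stmt1_general S Λ QH dual hA n hgfd
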